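/- arXiv:1604.08277 — 2 statements merged into one kernel-verified Lean document; each statement's English description precedes it below -/
import Mathlib

section
/- For a finite Coxeter group W of rank n = |S|, the Coxeter complex X_W (the order complex of the poset of cosets wW_T with T ⊊ S, ordered by reverse inclusion) is a simplicial complex homeomorphic to the (n-1)-dimensional sphere. -/
open Pointwise CategoryTheory

/-- The standard parabolic subgroup `W_T` generated by the simple reflections in `T ⊆ S`. -/
def CoxeterSystem.parabolic {B W : Type*} [Group W] {M : CoxeterMatrix B}
    (cs : CoxeterSystem M W) (T : Set B) : Subgroup W :=
  Subgroup.closure (cs.simple '' T)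

/-- The faces of the Coxeter complex: the cosets `w W_T` with `T ⊊ S`. -/
def CoxeterSystem.CosetFace {B W : Type} [Group W] {M : CoxeterMatrix B}
    (cs : CoxeterSystem M W) : Type :=
  {X : Set W // ∃ (w : W) (T : Set B), T ≠ Set.univ ∧ X = w • (cs.parabolic T : Set W)}

/-- The face order on cosets: `w W_T ≤ w' W_{T'}` iff `w W_T ⊇ w' W_{T'}`
(order by reverse inclusion). -/
instance {B W : Type} [Group W] {M : CoxeterMatrix B} (cs : CoxeterSystem M W) :
    PartialOrder cs.CosetFace where
  le X Y := Y.1 ⊆ X.1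
  le_refl X := subset_rfl
  le_trans X Y Z h h' := Set.Subset.trans h' h
  le_antisymm X Y h h' := Subtype.ext (Set.Subset.antisymm h' h)

/-- The geometric realization of the Coxeter complex of a Coxeter system, realized as the
geometric realization of the nerve of its poset of cosets (i.e. of the order complex of the
face poset, which is homeomorphic to the Coxeter complex itself). -/
noncomputable def CoxeterSystem.coxeterComplex {B W : Type} [Group W] {M : CoxeterMatrix B}
    (cs : CoxeterSystem M W) : TopCat :=
  SSet.toTop.obj (nerveFunctor.obj (Cat.of cs.CosetFace))


set_option linter.unusedSectionVars false

namespace CoxSphere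

section Rep

variable {B W : Type} [Fintype B] [DecidableEq B] [Group W] {M : CoxeterMatrix B}

/-- twice the Tits form -/
noncomputable def kk (M : CoxeterMatrix B) (i j : B) : ℝ := -2 * Real.cos (Real.pi / (M i j : ℝ))

lemma kk_self (i : B) : kk M i i = 2 := by simp [kk]

lemma kk_comm (i j : B) : kk M i j = kk M j i := by simp only [kk, M.symmetric i j]

noncomputable def ff (M : CoxeterMatrix B) (i : B) : Module.Dual ℝ (B → ℝ) :=
  ∑ j, kk M i j • LinearMap.proj j

lemma ff_apply (i : B) (z : B → ℝ) : ff M i z = ∑ j, kk M i j * z j := by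
  simp [ff]

lemma ff_single (i j : B) : ff M i (Pi.single j 1) = kk M i j := by
  simp [ff_apply, Pi.single_apply]

lemma ff_self (M : CoxeterMatrix B) (i : B) : ff M i (Pi.single i 1) = 2 := by
  rw [ff_single, kk_self]

noncomputable def rr (M : CoxeterMatrix B) (i : B) : (B → ℝ) ≃ₗ[ℝ] (B → ℝ) :=
  Module.reflection (ff_self M i)

lemma rr_apply (i : B) (z : B → ℝ) : rr M i z = z - ff M i z • (Pi.single i 1 : B → ℝ) := by
  simp [rr, Module.reflection_apply]

lemma rr_liftable (M : CoxeterMatrix B) : M.IsLiftable (rr M) := by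
  intro i j
  rcases eq_or_ne i j with rfl | hij
  · ext1 z
    simp [rr, Module.reflection_apply, ff_single, kk_self]
    module
  by_cases h0 : M i j = 0
  · simp [h0]
  have h1 : M i j ≠ 1 := M.off_diagonal i j hij
  by_cases h2 : M i j = 2
  · have hk : kk M i j = 0 := by simp [kk, h2]
    have hk' : kk M j i = 0 := by rw [kk_comm, hk]
    rw [h2]
    ext1 z
    rw [pow_two]
    simp only [LinearEquiv.mul_apply, rr_apply, map_sub, map_smul, ff_single, hk, hk', kk_self,
      LinearEquiv.coe_one, id]
    module
  have hm : 3 ≤ M i j := by omega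
  set m := M i j with hmdef
  set θ : ℝ := Real.pi / m with hθ
  have hmR : (3 : ℝ) ≤ m := by exact_mod_cast hm
  have hmθ : (m : ℝ) * θ = Real.pi := by rw [hθ]; field_simp
  have hθ0 : 0 < θ := by rw [hθ]; positivity
  have hs2 : Real.sin (2 * θ) ≠ 0 := by
    apply ne_of_gt
    apply Real.sin_pos_of_pos_of_lt_pi (by positivity)
    nlinarith
  have ht : 2 * Real.cos (2 * θ) = ff M i (Pi.single j 1) * ff M j (Pi.single i 1) - 2 := by
    rw [ff_single, ff_single, kk_comm j i, kk, ← hmdef, ← hθ, Real.cos_two_mul]; ring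
  ext1 z
  rw [rr, rr, Module.reflection_mul_reflection_pow_apply _ _ m z _ ht]
  have hS : ∀ n : ℤ, (Polynomial.Chebyshev.S ℝ n).eval (2 * Real.cos (2 * θ)) * Real.sin (2 * θ)
      = Real.sin ((n + 1) * (2 * θ)) := fun n => Polynomial.Chebyshev.S_two_mul_real_cos _ n
  rcases Nat.even_or_odd' m with ⟨p, hp | hp⟩
  · have hp' : (m : ℤ) = 2 * p := by exact_mod_cast hp
    have e1 : ((m : ℤ) - 2) / 2 = p - 1 := by omega
    have e2 : ((m : ℤ) - 1) / 2 = p - 1 := by omega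
    have hz : (Polynomial.Chebyshev.S ℝ ((p : ℤ) - 1)).eval (2 * Real.cos (2 * θ)) = 0 := by
      have := hS ((p : ℤ) - 1)
      have hpR : (m : ℝ) = 2 * p := by exact_mod_cast hp
      rw [show (((p : ℤ) - 1 : ℤ) + 1 : ℝ) * (2 * θ) = Real.pi by
        rw [← hmθ, hpR]; push_cast; ring, Real.sin_pi] at this
      exact (mul_eq_zero.mp this).resolve_right hs2
    simp [e1, e2, hz]
  · have hp' : (m : ℤ) = 2 * p + 1 := by exact_mod_cast hp
    have e1 : ((m : ℤ) - 1) / 2 = p := by omega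
    have e2 : ((m : ℤ) - 3) / 2 = p - 1 := by omega
    have e3 : ((m : ℤ)) / 2 = p := by omega
    have e4 : ((m : ℤ) - 2) / 2 = p - 1 := by omega
    have hz : (Polynomial.Chebyshev.S ℝ (p : ℤ)).eval (2 * Real.cos (2 * θ))
       + (Polynomial.Chebyshev.S ℝ ((p : ℤ) - 1)).eval (2 * Real.cos (2 * θ)) = 0 := by
      have h1 := hS ((p : ℤ) - 1)
      have h2 := hS (p : ℤ)
      have hpR : (m : ℝ) = 2 * p + 1 := by exact_mod_cast hp
      have hpθ : (2 * p : ℝ) * θ = Real.pi - θ := by rw [← hmθ, hpR]; ring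
      have h3 : Real.sin ((((p : ℤ) - 1 : ℤ) + 1 : ℝ) * (2 * θ)) = Real.sin θ := by
        rw [← Real.sin_pi_sub θ]; congr 1; rw [← hpθ]; push_cast; ring
      have h4 : Real.sin ((((p : ℤ) : ℝ) + 1) * (2 * θ)) = - Real.sin θ := by
        rw [← Real.sin_add_pi θ]; congr 1
        have : ((((p : ℤ) : ℝ) + 1) * (2 * θ)) = 2 * p * θ + 2 * θ := by push_cast; ring
        rw [this, hpθ]; ring
      rw [h3] at h1
      rw [h4] at h2
      have := congrArg₂ (· + ·) h2 h1
      simp only [← add_mul, neg_add_cancel] at this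
      exact (mul_eq_zero.mp this).resolve_right hs2
    simp [e1, e2, e3, e4, hz]

variable (cs : CoxeterSystem M W)

noncomputable def geo : W →* ((B → ℝ) ≃ₗ[ℝ] (B → ℝ)) := cs.lift ⟨rr M, rr_liftable M⟩

lemma geo_simple (i : B) : geo cs (cs.simple i) = rr M i := cs.lift_apply_simple _ i

noncomputable def qq (t : ℝ) : ℕ → ℝ
  | 0 => 0
  | 1 => 1
  | (n + 2) => t * qq t (n + 1) - qq t n

lemma qq_sin (θ : ℝ) (n : ℕ) : qq (2 * Real.cos θ) n * Real.sin θ = Real.sin (n * θ) ∧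
   qq (2 * Real.cos θ) (n + 1) * Real.sin θ = Real.sin ((n + 1) * θ) := by
  induction n with
  | zero => simp [qq]
  | succ n ih =>
    refine ⟨by simpa using ih.2, ?_⟩
    rw [qq, sub_mul, ih.1, mul_assoc, ih.2]
    have e1 : ((n + 1 : ℕ) + 1 : ℝ) * θ = (n + 1 : ℝ) * θ + θ := by push_cast; ring
    have e2 : (n : ℝ) * θ = (n + 1 : ℝ) * θ - θ := by ring
    rw [e1, e2, Real.sin_add, Real.sin_sub]; ring

lemma qq_two (n : ℕ) : qq 2 n = n ∧ qq 2 (n + 1) = n + 1 := by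
  induction n with
  | zero => simp [qq]
  | succ n ih =>
    refine ⟨by simpa using ih.2, ?_⟩
    rw [qq, ih.1, ih.2]; push_cast; ring

lemma qq_nonneg {i j : B} (hij : i ≠ j) (n : ℕ) (hn : M i j = 0 ∨ n ≤ M i j) :
    0 ≤ qq (- kk M i j) n := by
  have h1 : M i j ≠ 1 := M.off_diagonal i j hij
  by_cases h0 : M i j = 0
  · have : - kk M i j = 2 := by simp [kk, h0]
    rw [this, (qq_two n).1]; positivity
  have hn : n ≤ M i j := hn.resolve_left h0
  have hm : 2 ≤ M i j := by omega
  have hmR : (2 : ℝ) ≤ M i j := by exact_mod_cast hm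
  have hnR : (n : ℝ) ≤ M i j := by exact_mod_cast hn
  set θ : ℝ := Real.pi / (M i j : ℝ) with hθ
  have hmθ : (M i j : ℝ) * θ = Real.pi := by rw [hθ]; field_simp
  have hθ0 : 0 < θ := by rw [hθ]; positivity
  have : - kk M i j = 2 * Real.cos θ := by simp [kk, hθ]
  rw [this]
  have hs : 0 < Real.sin θ := Real.sin_pos_of_pos_of_lt_pi hθ0 (by nlinarith)
  have h := (qq_sin θ n).1
  have h2 : 0 ≤ Real.sin (n * θ) :=
    Real.sin_nonneg_of_nonneg_of_le_pi (by positivity) (by rw [← hmθ]; gcongr)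
  rw [← h] at h2
  exact nonneg_of_mul_nonneg_left h2 hs

lemma geo_alt (i j : B) (k : ℕ) :
    geo cs (cs.wordProd (CoxeterSystem.alternatingWord i j k)) (Pi.single i 1) =
      if Even k then
        qq (-kk M i j) (k + 1) • (Pi.single i 1 : B → ℝ) + qq (-kk M i j) k • (Pi.single j 1 : B → ℝ)
      else
        qq (-kk M i j) k • (Pi.single i 1 : B → ℝ)
          + qq (-kk M i j) (k + 1) • (Pi.single j 1 : B → ℝ) := by
  induction k with
  | zero => simp [CoxeterSystem.alternatingWord, qq]
  | succ k ih =>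
    rw [CoxeterSystem.alternatingWord_succ', cs.wordProd_cons, map_mul, LinearEquiv.mul_apply, ih,
      geo_simple, rr_apply]
    by_cases hk : Even k
    · have : ¬ Even (k + 1) := by simpa [Nat.even_add_one] using hk
      simp only [hk, this, if_true, if_false, map_add, map_smul, ff_single, kk_self, qq,
        kk_comm j i, smul_eq_mul]
      module
    · have : Even (k + 1) := by simpa [Nat.even_add_one] using hk
      simp only [hk, this, if_true, if_false, map_add, map_smul, ff_single, kk_self, qq,
        smul_eq_mul]
      module

lemma exists_alt (n : ℕ) : ∀ (w : W) (i j : B), cs.length w = n → ¬ cs.IsRightDescent w i →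
    ∃ (k : ℕ) (v : W), w = v * cs.wordProd (CoxeterSystem.alternatingWord i j k) ∧
      cs.length w = cs.length v + k ∧ ¬ cs.IsRightDescent v i ∧ ¬ cs.IsRightDescent v j ∧
      (cs.IsRightDescent w j → 1 ≤ k) := by
  induction n using Nat.strong_induction_on with
  | _ n ih =>
    intro w i j hn hi
    by_cases hj : cs.IsRightDescent w j
    · have hlt := hj
      rw [cs.isRightDescent_iff] at hlt
      have hj' : ¬ cs.IsRightDescent (w * cs.simple j) j :=
        cs.isRightDescent_iff_not_isRightDescent_mul.mp hj
      obtain ⟨k, v, h1, h2, h3, h4, -⟩ := ih _ (by omega) (w * cs.simple j) j i rfl hj'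
      refine ⟨k + 1, v, ?_, by omega, h4, h3, by omega⟩
      rw [CoxeterSystem.alternatingWord_succ, cs.wordProd_concat, ← mul_assoc, ← h1]
      simp
    · exact ⟨0, w, by simp [CoxeterSystem.alternatingWord], by simp, hi, hj, fun h => absurd h hj⟩

lemma alt_lt (w v : W) (i j : B) (k : ℕ) (hM : M i j ≠ 0)
    (hw : w = v * cs.wordProd (CoxeterSystem.alternatingWord i j k))
    (hl : cs.length w = cs.length v + k) (hi : ¬ cs.IsRightDescent w i) : k < M i j := by
  by_contra hk
  push Not at hk
  apply hi
  -- write the alternating word of length k as prefix times the last `M i j` letters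
  have key : ∀ (m d : ℕ), ∃ u : W, cs.length u ≤ d ∧
      cs.wordProd (CoxeterSystem.alternatingWord i j (m + d))
        = u * cs.wordProd (CoxeterSystem.alternatingWord i j m) := by
    intro m d
    induction d with
    | zero => exact ⟨1, by simp, by simp⟩
    | succ d ih =>
      obtain ⟨u, hu, he⟩ := ih
      rw [← add_assoc, CoxeterSystem.alternatingWord_succ', cs.wordProd_cons, he, ← mul_assoc]
      refine ⟨_, ?_, rfl⟩
      refine (cs.length_mul_le _ _).trans ?_
      rw [cs.length_simple]; omega
  obtain ⟨d, hd⟩ := Nat.exists_eq_add_of_le hk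
  obtain ⟨u, hu, he⟩ := key (M i j) d
  obtain ⟨m', hm'⟩ := Nat.exists_eq_succ_of_ne_zero hM
  have hb : cs.wordProd (CoxeterSystem.alternatingWord i j (M i j)) =
      cs.wordProd (CoxeterSystem.alternatingWord i j m') * cs.simple i := by
    rw [cs.prod_alternatingWord_eq_prod_alternatingWord_sub i j (M i j) (by omega)]
    rw [show M i j * 2 - M i j = m' + 1 by omega, CoxeterSystem.alternatingWord_succ,
      cs.wordProd_concat]
  have hws : w * cs.simple i =
      v * (u * cs.wordProd (CoxeterSystem.alternatingWord i j m')) := by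
    rw [hw, hd, he, hb]; simp [mul_assoc]
  unfold CoxeterSystem.IsRightDescent
  rw [hws]
  have h1 := cs.length_mul_le v (u * cs.wordProd (CoxeterSystem.alternatingWord i j m'))
  have h2 := cs.length_mul_le u (cs.wordProd (CoxeterSystem.alternatingWord i j m'))
  have h3 := cs.length_wordProd_le (CoxeterSystem.alternatingWord i j m')
  rw [CoxeterSystem.length_alternatingWord] at h3
  omega

theorem geo_pos (n : ℕ) : ∀ (w : W) (i : B), cs.length w = n → ¬ cs.IsRightDescent w i →
    0 ≤ geo cs w (Pi.single i 1) := by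
  induction n using Nat.strong_induction_on with
  | _ n ih =>
    intro w i hn hi
    by_cases h1 : w = 1
    · subst h1
      simp
    obtain ⟨j, hj⟩ := cs.exists_rightDescent_of_ne_one h1
    have hij : i ≠ j := by rintro rfl; exact hi hj
    obtain ⟨k, v, hw, hl, hvi, hvj, hk⟩ := exists_alt cs _ w i j rfl hi
    have hk := hk hj
    have hpi := ih (cs.length v) (by omega) v i rfl hvi
    have hpj := ih (cs.length v) (by omega) v j rfl hvj
    have hlt : M i j = 0 ∨ k + 1 ≤ M i j := by
      by_cases h0 : M i j = 0
      · exact Or.inl h0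
      · exact Or.inr (alt_lt cs w v i j k h0 hw hl hi)
    have q1 := qq_nonneg hij (k + 1) hlt
    have q2 := qq_nonneg hij k (hlt.imp_right (by omega))
    rw [hw, map_mul, LinearEquiv.mul_apply, geo_alt]
    split_ifs
    · rw [map_add, map_smul, map_smul]
      exact add_nonneg (smul_nonneg q1 hpi) (smul_nonneg q2 hpj)
    · rw [map_add, map_smul, map_smul]
      exact add_nonneg (smul_nonneg q2 hpi) (smul_nonneg q1 hpj)

theorem geo_neg (w : W) (i : B) (h : cs.IsRightDescent w i) :
    geo cs w (Pi.single i 1) ≤ 0 := by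
  have h' := cs.isRightDescent_iff_not_isRightDescent_mul.mp h
  have := geo_pos cs _ (w * cs.simple i) i rfl h'
  rw [map_mul, LinearEquiv.mul_apply, geo_simple, rr_apply, ff_self] at this
  have e : (Pi.single i 1 - (2 : ℝ) • Pi.single i 1 : B → ℝ) = - Pi.single i 1 := by module
  rw [e, map_neg] at this
  simpa using this

end Rep

end CoxSphere

namespace CoxSphere

section Act

open Matrix

variable {B W : Type} [Fintype B] [DecidableEq B] [Group W] {M : CoxeterMatrix B}
variable (cs : CoxeterSystem M W)

/-- the dual action in the coordinates given by the simple roots -/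
noncomputable def act (w : W) : (B → ℝ) →ₗ[ℝ] (B → ℝ) where
  toFun c := fun s => c ⬝ᵥ geo cs w⁻¹ (Pi.single s 1)
  map_add' c d := by ext s; simp [add_dotProduct]
  map_smul' a c := by ext s; simp [smul_dotProduct]

lemma act_dot (w : W) (c z : B → ℝ) : act cs w c ⬝ᵥ z = c ⬝ᵥ geo cs w⁻¹ z := by
  have hz : z = ∑ s, z s • (Pi.single s 1 : B → ℝ) := by
    ext t; simp [Finset.sum_apply, Pi.single_apply]
  conv_rhs => rw [hz]
  rw [map_sum, dotProduct_sum, dotProduct]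
  refine Finset.sum_congr rfl fun s _ => ?_
  rw [map_smul, dotProduct_smul, smul_eq_mul, mul_comm]
  rfl

lemma dot_ext {c d : B → ℝ} (h : ∀ z, c ⬝ᵥ z = d ⬝ᵥ z) : c = d := by
  ext s; simpa using h (Pi.single s 1)

lemma act_mul (u v : W) (c : B → ℝ) : act cs (u * v) c = act cs u (act cs v c) := by
  apply dot_ext; intro z
  simp [act_dot, _root_.mul_inv_rev]

lemma act_one (c : B → ℝ) : act cs 1 c = c := by
  apply dot_ext; intro z
  simp [act_dot]

lemma act_simple (i : B) (c : B → ℝ) : act cs (cs.simple i) c = c - c i • kk M i := by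
  apply dot_ext; intro z
  rw [act_dot, cs.inv_simple, geo_simple, rr_apply, dotProduct_sub, dotProduct_smul,
    sub_dotProduct, smul_dotProduct, ff_apply, dotProduct_single_one, smul_eq_mul, smul_eq_mul,
    mul_comm]
  rfl

lemma act_fix_of_zero (i : B) (c : B → ℝ) (h : c i = 0) : act cs (cs.simple i) c = c := by
  simp [act_simple, h]

lemma zero_of_act_fix (i : B) (c : B → ℝ) (h : act cs (cs.simple i) c = c) : c i = 0 := by
  have := congrFun h i
  rw [act_simple] at this
  simp [kk_self] at this
  linarith

lemma act_stab (n : ℕ) : ∀ (w : W) (c c' : B → ℝ), cs.length w = n → 0 ≤ c → 0 ≤ c' →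
    act cs w c = c' → c = c' ∧ w ∈ cs.parabolic {s | c s = 0} := by
  induction n with
  | zero =>
    intro w c c' hw _ _ h
    rw [cs.length_eq_zero_iff] at hw
    subst hw
    rw [act_one] at h
    exact ⟨h, Subgroup.one_mem _⟩
  | succ n ih =>
    intro w c c' hw hc hc' h
    have h1 : w ≠ 1 := by rintro rfl; simp at hw
    obtain ⟨i, hi⟩ := cs.exists_rightDescent_of_ne_one h1
    have hneg := geo_neg cs w i hi
    have hci : c i = 0 := by
      apply le_antisymm _ (hc i)
      have : c' ⬝ᵥ geo cs w (Pi.single i 1) = c i := by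
        rw [← h, act_dot, ← LinearEquiv.mul_apply, ← map_mul]; simp
      rw [← this]
      exact Finset.sum_nonpos fun s _ => mul_nonpos_of_nonneg_of_nonpos (hc' s) (hneg s)
    have hfix := act_fix_of_zero cs i c hci
    have hlen : cs.length (w * cs.simple i) = n := by
      rw [cs.isRightDescent_iff] at hi; omega
    obtain ⟨e, hm⟩ := ih (w * cs.simple i) c c' hlen hc hc' (by rw [act_mul, hfix, h])
    refine ⟨e, ?_⟩
    have hs : cs.simple i ∈ cs.parabolic {s | c s = 0} :=
      Subgroup.subset_closure ⟨i, hci, rfl⟩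
    simpa using Subgroup.mul_mem _ hm hs

lemma act_fix_parabolic (T : Set B) (c : B → ℝ) (hT : ∀ s ∈ T, c s = 0) (w : W)
    (hw : w ∈ cs.parabolic T) : act cs w c = c := by
  induction hw using Subgroup.closure_induction with
  | mem x hx =>
    obtain ⟨i, hi, rfl⟩ := hx
    exact act_fix_of_zero cs i c (hT i hi)
  | one => exact act_one cs c
  | mul x y _ _ hx hy => rw [act_mul, hy, hx]
  | inv x _ hx => conv_lhs => rw [← hx]
                  rw [← act_mul]; simp [act_one]

lemma act_surj [Finite W] (x : B → ℝ) : ∃ (w : W) (c : B → ℝ), 0 ≤ c ∧ act cs w c = x := by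
  have := Fintype.ofFinite W
  let Q : (B → ℝ) → (B → ℝ) → ℝ := fun a b => ∑ u : W, act cs u a ⬝ᵥ act cs u b
  have Qinv : ∀ (w : W) a b, Q (act cs w a) (act cs w b) = Q a b := by
    intro w a b
    simp only [Q, ← act_mul]
    exact Fintype.sum_equiv (Equiv.mulRight w) _ _ (fun u => by simp)
  let y : B → ℝ := fun _ => 1
  obtain ⟨w, hw⟩ := Finite.exists_max (fun w : W => Q (act cs w x) y)
  refine ⟨w⁻¹, act cs w x, ?_, by rw [← act_mul]; simp [act_one]⟩
  intro i
  set c := act cs w x with hc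
  have h1 : Q (act cs (cs.simple i) c) y ≤ Q c y := by
    rw [hc, ← act_mul]; exact hw _
  have Qsub : ∀ a (t : ℝ) b d, Q (a - t • b) d = Q a d - t * Q b d := by
    intro a t b d
    simp only [Q, map_sub, map_smul, sub_dotProduct, smul_dotProduct, Finset.sum_sub_distrib,
      Finset.mul_sum, smul_eq_mul]
  have Qsub' : ∀ a (t : ℝ) b d, Q d (a - t • b) = Q d a - t * Q d b := by
    intro a t b d
    simp only [Q, map_sub, map_smul, dotProduct_sub, dotProduct_smul, Finset.sum_sub_distrib,
      Finset.mul_sum, smul_eq_mul]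
  have hkpos : 0 < Q (kk M i) (kk M i) := by
    have hnn : ∀ v : B → ℝ, 0 ≤ v ⬝ᵥ v := fun v => Finset.sum_nonneg fun _ _ => mul_self_nonneg _
    apply Finset.sum_pos' (fun u _ => hnn _)
    refine ⟨1, Finset.mem_univ _, ?_⟩
    rw [act_one]
    apply Finset.sum_pos' (fun _ _ => mul_self_nonneg _)
    exact ⟨i, Finset.mem_univ _, by rw [kk_self]; norm_num⟩
  have hk : act cs (cs.simple i) (kk M i) = - kk M i := by
    rw [act_simple, kk_self]; module
  have h2 := Qinv (cs.simple i) (kk M i) y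
  have h3 : act cs (cs.simple i) y = y - (1 : ℝ) • kk M i := by rw [act_simple]
  have hneg : - kk M i = (0 : B → ℝ) - (1 : ℝ) • kk M i := by module
  have Q0 : ∀ d, Q 0 d = 0 := by intro d; simp [Q]
  rw [hk, h3, Qsub', hneg, Qsub, Qsub, Q0, Q0] at h2
  rw [act_simple, Qsub] at h1
  have h4 : 0 < Q (kk M i) y := by linarith
  have : 0 ≤ c i * Q (kk M i) y := by linarith
  exact nonneg_of_mul_nonneg_left this h4

end Act

end CoxSphere

namespace CoxSphere

section LayerCake

variable {B : Type} [Fintype B] [DecidableEq B]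

lemma lc_exists (n : ℕ) : ∀ (c : B → ℝ), 0 ≤ c → (Finset.univ.filter (fun s => c s ≠ 0)).card = n →
    ∃ ν : Finset B → ℝ, 0 ≤ ν ∧ (∀ A A', ν A ≠ 0 → ν A' ≠ 0 → A ⊆ A' ∨ A' ⊆ A) ∧ ν ∅ = 0 ∧
      (∀ s, ∑ A, (if s ∈ A then ν A else 0) = c s) ∧ (∀ A, ν A ≠ 0 → ∀ s ∈ A, c s ≠ 0) := by
  induction n using Nat.strong_induction_on with
  | _ n ih =>
    intro c hc hn
    set S := Finset.univ.filter (fun s => c s ≠ 0) with hS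
    by_cases hne : S.Nonempty
    · obtain ⟨s0, hs0, hmin⟩ := S.exists_min_image c hne
      have hs0' : c s0 ≠ 0 := by simpa [hS] using hs0
      have hpos : 0 < c s0 := lt_of_le_of_ne (hc s0) (Ne.symm hs0')
      let c' : B → ℝ := fun s => if s ∈ S then c s - c s0 else 0
      have hc'S : ∀ s, c' s ≠ 0 → s ∈ S ∧ s ≠ s0 := by
        intro s hs
        by_cases h : s ∈ S
        · refine ⟨h, ?_⟩
          rintro rfl
          simp [c'] at hs
        · simp [c', h] at hs
      have hc' : 0 ≤ c' := by
        intro s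
        by_cases h : s ∈ S
        · simpa [c', h] using hmin s h
        · simp [c', h]
      have hcard : (Finset.univ.filter (fun s => c' s ≠ 0)).card < n := by
        rw [← hn]
        apply Finset.card_lt_card
        rw [Finset.ssubset_iff_of_subset]
        · refine ⟨s0, hs0, ?_⟩
          simp [c']
        · intro s hs
          exact (hc'S s (by simpa using hs)).1
      obtain ⟨ν, h0, hch, he, hsum, hsup⟩ := ih _ hcard c' hc' rfl
      have hsub : ∀ A, ν A ≠ 0 → A ⊆ S := fun A hA s hs => (hc'S s (hsup A hA s hs)).1
      have hνS : ν S = 0 := by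
        by_contra h
        exact (hc'S s0 (hsup S h s0 hs0)).2 rfl
      refine ⟨fun A => ν A + if A = S then c s0 else 0, ?_, ?_, ?_, ?_, ?_⟩
      · intro A
        have := h0 A
        simp only [Pi.zero_apply] at this ⊢
        split_ifs <;> linarith
      · have key : ∀ A, (ν A + if A = S then c s0 else 0) ≠ 0 → A = S ∨ ν A ≠ 0 := by
          intro A hA
          by_cases h : A = S
          · exact Or.inl h
          · right; simpa [h] using hA
        intro A A' hA hA'
        rcases key A hA with rfl | hA
        · rcases key A' hA' with rfl | hA'
          · exact Or.inl subset_rfl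
          · exact Or.inr (hsub _ hA')
        · rcases key A' hA' with rfl | hA'
          · exact Or.inl (hsub _ hA)
          · exact hch A A' hA hA'
      · have : ∅ ≠ S := hne.ne_empty.symm
        simp [he, this]
      · intro s
        have : ∀ A, (if s ∈ A then (ν A + if A = S then c s0 else 0) else 0) =
            (if s ∈ A then ν A else 0) + if A = S then (if s ∈ S then c s0 else 0) else 0 := by
          intro A
          by_cases h1 : A = S
          · subst h1; by_cases h2 : s ∈ S <;> simp [h2]
          · by_cases h2 : s ∈ A <;> simp [h1, h2]
        simp only [this, Finset.sum_add_distrib, hsum s, Finset.sum_ite_eq', Finset.mem_univ,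
          if_true]
        by_cases h : s ∈ S
        · simp [c', h]
        · have : c s = 0 := by simpa [hS] using h
          simp [c', h, this]
      · intro A hA s hs
        by_cases h : A = S
        · subst h; simpa [hS] using hs
        · have : ν A ≠ 0 := by simpa [h] using hA
          simpa [hS] using hsub A this hs
    · refine ⟨0, le_rfl, by simp, rfl, ?_, by simp⟩
      intro s
      by_contra h
      apply hne
      refine ⟨s, ?_⟩
      simp only [hS, Finset.mem_filter, Finset.mem_univ, true_and]
      intro h'
      simp [h'] at h

lemma lc_witness (ν : Finset B → ℝ)
    (hch : ∀ A A', ν A ≠ 0 → ν A' ≠ 0 → A ⊆ A' ∨ A' ⊆ A) (D : Finset B) (hD : D.Nonempty) :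
    ∃ s ∈ D, ∀ A, ν A ≠ 0 → s ∈ A → D ⊆ A := by
  set F := Finset.univ.filter (fun A => ν A ≠ 0 ∧ ¬ D ⊆ A) with hF
  by_cases hne : F.Nonempty
  · obtain ⟨A0, hA0, hmax⟩ := F.exists_max_image Finset.card hne
    simp only [hF, Finset.mem_filter, Finset.mem_univ, true_and] at hA0 hmax
    obtain ⟨s, hs, hs'⟩ := Finset.not_subset.mp hA0.2
    refine ⟨s, hs, fun A hA hsA => ?_⟩
    by_contra hDA
    have h1 := hmax A ⟨hA, hDA⟩
    rcases hch A A0 hA hA0.1 with h | h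
    · exact hs' (h hsA)
    · rw [Finset.eq_of_subset_of_card_le h h1] at hs'
      exact hs' hsA
  · obtain ⟨s, hs⟩ := hD
    refine ⟨s, hs, fun A hA _ => ?_⟩
    by_contra hDA
    exact hne ⟨A, by simp [hF, hA, hDA]⟩

lemma lc_le (ν ν' : Finset B → ℝ) (h0' : 0 ≤ ν')
    (hch : ∀ A A', ν A ≠ 0 → ν A' ≠ 0 → A ⊆ A' ∨ A' ⊆ A)
    (h : ∀ s, ∑ A, (if s ∈ A then ν A else 0) = ∑ A, (if s ∈ A then ν' A else 0))
    (D : Finset B) (hD : D.Nonempty) :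
    ∑ A, (if D ⊆ A then ν' A else 0) ≤ ∑ A, (if D ⊆ A then ν A else 0) := by
  obtain ⟨s, hs, hs'⟩ := lc_witness ν hch D hD
  have e : ∑ A, (if D ⊆ A then ν A else 0) = ∑ A, (if s ∈ A then ν A else 0) := by
    refine Finset.sum_congr rfl fun A _ => ?_
    by_cases hA : ν A = 0
    · simp [hA]
    · have : D ⊆ A ↔ s ∈ A := ⟨fun h => h hs, hs' A hA⟩
      simp [this]
  rw [e, h s]
  refine Finset.sum_le_sum fun A _ => ?_
  by_cases h1 : D ⊆ A
  · simp [h1, h1 hs]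
  · have := h0' A
    simp only [Pi.zero_apply] at this
    by_cases h2 : s ∈ A <;> simp [h1, h2, this]

lemma lc_unique (ν ν' : Finset B → ℝ) (h0 : 0 ≤ ν) (h0' : 0 ≤ ν')
    (hch : ∀ A A', ν A ≠ 0 → ν A' ≠ 0 → A ⊆ A' ∨ A' ⊆ A)
    (hch' : ∀ A A', ν' A ≠ 0 → ν' A' ≠ 0 → A ⊆ A' ∨ A' ⊆ A)
    (he : ν ∅ = 0) (he' : ν' ∅ = 0)
    (h : ∀ s, ∑ A, (if s ∈ A then ν A else 0) = ∑ A, (if s ∈ A then ν' A else 0)) : ν = ν' := by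
  have hF : ∀ D : Finset B, D.Nonempty →
      ∑ A, (if D ⊆ A then ν A else 0) = ∑ A, (if D ⊆ A then ν' A else 0) := fun D hD =>
    le_antisymm (lc_le ν' ν h0 hch' (fun s => (h s).symm) D hD) (lc_le ν ν' h0' hch h D hD)
  have key : ∀ n : ℕ, ∀ D : Finset B, Fintype.card B - D.card = n → ν D = ν' D := by
    intro n
    induction n using Nat.strong_induction_on with
    | _ n ih =>
      intro D hn
      rcases D.eq_empty_or_nonempty with rfl | hD
      · rw [he, he']
      have h1 := hF D hD
      rw [← Finset.add_sum_erase _ _ (Finset.mem_univ D),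
        ← Finset.add_sum_erase _ _ (Finset.mem_univ D)] at h1
      simp only [subset_rfl, if_true] at h1
      have h2 : ∑ A ∈ Finset.univ.erase D, (if D ⊆ A then ν A else 0) =
          ∑ A ∈ Finset.univ.erase D, (if D ⊆ A then ν' A else 0) := by
        refine Finset.sum_congr rfl fun A hA => ?_
        by_cases hDA : D ⊆ A
        · have hne : D ≠ A := fun e => (Finset.ne_of_mem_erase hA) e.symm
          have := Finset.card_lt_card (hDA.ssubset_of_ne hne)
          have := Finset.card_le_univ A
          rw [ih _ (by omega) A rfl]
        · simp [hDA]
      linarith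
  funext D
  exact key _ D rfl

end LayerCake

end CoxSphere

namespace CoxSphere

section Faces

open Classical

variable {B W : Type} [Fintype B] [Group W] {M : CoxeterMatrix B}
variable (cs : CoxeterSystem M W)

/-- indicator vector -/
noncomputable def ind (A : Finset B) : B → ℝ := fun s => if s ∈ A then 1 else 0

lemma par_mono {T T' : Set B} (h : T ⊆ T') : cs.parabolic T ≤ cs.parabolic T' :=
  Subgroup.closure_mono (Set.image_mono h)

lemma par_le {T T' : Set B} (h : cs.parabolic T ≤ cs.parabolic T') : T ⊆ T' := by
  intro s hs
  have h1 : cs.simple s ∈ cs.parabolic T' := h (Subgroup.subset_closure ⟨s, hs, rfl⟩)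
  have h2 := act_fix_parabolic cs T' (fun r => if r ∈ T' then 0 else 1)
    (fun r hr => by simp [hr]) _ h1
  have h3 := zero_of_act_fix cs s _ h2
  by_contra hne
  simp [hne] at h3

noncomputable def fw (X : cs.CosetFace) : W := X.2.choose

noncomputable def fT (X : cs.CosetFace) : Set B := X.2.choose_spec.choose

lemma fT_ne (X : cs.CosetFace) : fT cs X ≠ Set.univ := X.2.choose_spec.choose_spec.1

lemma f_eq (X : cs.CosetFace) : X.1 = fw cs X • (cs.parabolic (fT cs X) : Set W) :=
  X.2.choose_spec.choose_spec.2

lemma mem_iff (X : cs.CosetFace) (u : W) :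
    u ∈ X.1 ↔ (fw cs X)⁻¹ * u ∈ cs.parabolic (fT cs X) := by
  rw [f_eq, Set.mem_smul_set_iff_inv_smul_mem]; rfl

lemma fw_mem (X : cs.CosetFace) : fw cs X ∈ X.1 := by
  rw [mem_iff]; simp [Subgroup.one_mem]

lemma eq_of_mem (X : cs.CosetFace) (u : W) (hu : u ∈ X.1) :
    X.1 = u • (cs.parabolic (fT cs X) : Set W) := by
  ext g
  rw [mem_iff] at hu
  rw [mem_iff, Set.mem_smul_set_iff_inv_smul_mem, smul_eq_mul, SetLike.mem_coe]
  have e : (fw cs X)⁻¹ * g = ((fw cs X)⁻¹ * u) * (u⁻¹ * g) := by group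
  rw [e, Subgroup.mul_mem_cancel_left _ hu]

noncomputable def fA (X : cs.CosetFace) : Finset B := Finset.univ.filter (fun s => s ∉ fT cs X)

lemma fA_nonempty (X : cs.CosetFace) : (fA cs X).Nonempty := by
  obtain ⟨s, hs⟩ := (Set.ne_univ_iff_exists_notMem _).mp (fT_ne cs X)
  exact ⟨s, by simpa [fA] using hs⟩

noncomputable def vv (X : cs.CosetFace) : B → ℝ := act cs (fw cs X) (ind (fA cs X))

lemma vv_eq (X : cs.CosetFace) (u : W) (hu : u ∈ X.1) : vv cs X = act cs u (ind (fA cs X)) := by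
  rw [mem_iff] at hu
  have := act_fix_parabolic cs (fT cs X) (ind (fA cs X))
    (fun s hs => by simp [ind, fA, hs]) _ hu
  rw [vv]
  conv_lhs => rw [← this]
  rw [← act_mul]; simp

/-- the face of type `A` containing `u` -/
noncomputable def face (u : W) (A : Finset B) (hA : A.Nonempty) : cs.CosetFace :=
  ⟨u • (cs.parabolic {s | s ∉ A} : Set W), u, {s | s ∉ A}, by
    obtain ⟨s, hs⟩ := hA
    intro h
    have : s ∈ {s | s ∉ A} := by rw [h]; trivial
    exact this hs, rfl⟩

lemma mem_face (u : W) (A : Finset B) (hA : A.Nonempty) : u ∈ (face cs u A hA).1 := by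
  rw [face, Set.mem_smul_set_iff_inv_smul_mem]; simp [Subgroup.one_mem]

lemma le_fA {X Y : cs.CosetFace} (h : X ≤ Y) : fA cs X ⊆ fA cs Y := by
  have h' : Y.1 ⊆ X.1 := h
  have hu := fw_mem cs Y
  have e1 := f_eq cs Y
  have e2 := eq_of_mem cs X _ (h' hu)
  rw [e1, e2, Set.smul_set_subset_smul_set_iff] at h'
  have := par_le cs (T := fT cs Y) (T' := fT cs X) h'
  intro s
  simp only [fA, Finset.mem_filter, Finset.mem_univ, true_and]
  exact fun hs hs' => hs (this hs')

lemma fA_face (u : W) (A : Finset B) (hA : A.Nonempty) : fA cs (face cs u A hA) = A := by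
  have e := eq_of_mem cs _ u (mem_face cs u A hA)
  have e' : u • (cs.parabolic {s | s ∉ A} : Set W) =
    u • (cs.parabolic (fT cs (face cs u A hA)) : Set W) := e
  have e2 : cs.parabolic {s | s ∉ A} = cs.parabolic (fT cs (face cs u A hA)) :=
    SetLike.coe_injective (smul_left_cancel u e')
  have e3 := Set.Subset.antisymm (par_le cs e2.le) (par_le cs e2.ge)
  ext s
  rw [fA, ← e3]; simp

lemma face_fA (X : cs.CosetFace) (u : W) (hu : u ∈ X.1) :
    face cs u (fA cs X) (fA_nonempty cs X) = X := by
  apply Subtype.ext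
  rw [eq_of_mem cs X u hu, face]
  congr 2
  congr 1
  simp [fA]

lemma face_le (u : W) (A A' : Finset B) (hA : A.Nonempty) (hA' : A'.Nonempty) (h : A ⊆ A') :
    face cs u A hA ≤ face cs u A' hA' := by
  change (face cs u A' hA').1 ⊆ (face cs u A hA).1
  rw [face, face, Set.smul_set_subset_smul_set_iff]
  exact par_mono cs (fun s hs hs' => hs (h hs'))

noncomputable def hat (u : W) (μ : cs.CosetFace → ℝ) (A : Finset B) : ℝ :=
  if h : A.Nonempty then μ (face cs u A h) else 0

instance [Finite W] : Finite cs.CosetFace := by unfold CoxeterSystem.CosetFace; infer_instance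

lemma sum_hat [Fintype cs.CosetFace] (u : W) (μ : cs.CosetFace → ℝ)
    (hμ : ∀ X, μ X ≠ 0 → u ∈ X.1) :
    ∑ X, μ X • vv cs X = act cs u (fun s => ∑ A, if s ∈ A then hat cs u μ A else 0) := by
  have h1 : ∀ X, μ X • vv cs X = act cs u (μ X • ind (fA cs X)) := by
    intro X
    by_cases h : μ X = 0
    · simp [h]
    · rw [map_smul, vv_eq cs X u (hμ X h)]
  simp only [h1, ← map_sum]
  congr 1
  ext s
  rw [Finset.sum_apply]
  symm
  rw [← Finset.sum_filter_of_ne (p := Finset.Nonempty)]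
  · rw [← Finset.sum_attach]
    refine Finset.sum_of_injOn
      (fun A : {A // A ∈ Finset.univ.filter (Finset.Nonempty (α := B))} =>
        face cs u A.1 (Finset.mem_filter.mp A.2).2) ?_ ?_ ?_ ?_
    · intro A _ A' _ h
      have := congrArg (fA cs) h
      simp only [fA_face] at this
      exact Subtype.ext this
    · intro A _; simp
    · intro X _ hX
      by_contra hne
      apply hX
      have hX0 : μ X ≠ 0 := by
        intro h; simp [h] at hne
      exact ⟨⟨fA cs X, by simpa using fA_nonempty cs X⟩, by simp, face_fA cs X u (hμ X hX0)⟩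
    · intro A _
      have hA : A.1.Nonempty := (Finset.mem_filter.mp A.2).2
      simp [hat, hA, fA_face, ind]
  · intro A _ h
    by_contra hA
    simp [hat, hA] at h

lemma exists_common [Finite W] (μ : cs.CosetFace → ℝ)
    (hch : ∀ X Y, μ X ≠ 0 → μ Y ≠ 0 → X ≤ Y ∨ Y ≤ X) : ∃ u : W, ∀ X, μ X ≠ 0 → u ∈ X.1 := by
  by_cases hne : ({X | μ X ≠ 0} : Set cs.CosetFace).Nonempty
  · obtain ⟨X, hX⟩ := (Set.toFinite {X | μ X ≠ 0}).exists_maximal hne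
    refine ⟨fw cs X, fun Y hY => ?_⟩
    have hle : Y ≤ X := by
      rcases hch X Y hX.1 hY with h | h
      · exact hX.2 hY h
      · exact h
    have : X.1 ⊆ Y.1 := hle
    exact this (fw_mem cs X)
  · refine ⟨1, fun X hX => absurd ⟨X, hX⟩ hne⟩

lemma hat_chain (u : W) (μ : cs.CosetFace → ℝ)
    (hch : ∀ X Y, μ X ≠ 0 → μ Y ≠ 0 → X ≤ Y ∨ Y ≤ X) (A A' : Finset B)
    (hA : hat cs u μ A ≠ 0) (hA' : hat cs u μ A' ≠ 0) : A ⊆ A' ∨ A' ⊆ A := by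
  have h1 : A.Nonempty := by by_contra h; simp [hat, h] at hA
  have h2 : A'.Nonempty := by by_contra h; simp [hat, h] at hA'
  rw [hat, dif_pos h1] at hA
  rw [hat, dif_pos h2] at hA'
  refine (hch _ _ hA hA').imp (fun h => ?_) (fun h => ?_) <;>
  · have := le_fA cs h
    rwa [fA_face, fA_face] at this

lemma hat_nonneg (u : W) (μ : cs.CosetFace → ℝ) (h : 0 ≤ μ) : 0 ≤ hat cs u μ := by
  intro A
  simp only [hat, Pi.zero_apply]
  split_ifs
  · exact h _
  · exact le_rfl

theorem fan_exists [Finite W] [Fintype cs.CosetFace] (x : B → ℝ) :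
    ∃ μ : cs.CosetFace → ℝ, 0 ≤ μ ∧ (∀ X Y, μ X ≠ 0 → μ Y ≠ 0 → X ≤ Y ∨ Y ≤ X) ∧
      ∑ X, μ X • vv cs X = x := by
  obtain ⟨u, c, hc, rfl⟩ := act_surj cs x
  obtain ⟨ν, h0, hch, he, hsum, -⟩ := lc_exists _ c hc rfl
  refine ⟨fun X => if u ∈ X.1 then ν (fA cs X) else 0, ?_, ?_, ?_⟩
  · intro X
    have := h0 (fA cs X)
    simp only [Pi.zero_apply] at this ⊢
    split_ifs
    · exact this
    · exact le_rfl
  · intro X Y hX hY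
    simp only [ne_eq, ite_eq_right_iff, not_forall] at hX hY
    obtain ⟨hX, hX'⟩ := hX
    obtain ⟨hY, hY'⟩ := hY
    rw [← face_fA cs X u hX, ← face_fA cs Y u hY]
    refine (hch _ _ hX' hY').imp (fun h => face_le cs u _ _ _ _ h)
      (fun h => face_le cs u _ _ _ _ h)
  · rw [sum_hat cs u _ (by
      intro X hX
      simp only [ne_eq, ite_eq_right_iff, not_forall] at hX
      exact hX.1)]
    congr 1
    ext s
    rw [← hsum s]
    refine Finset.sum_congr rfl fun A _ => ?_
    congr 1
    by_cases hA : A.Nonempty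
    · simp [hat, hA, mem_face, fA_face]
    · rw [Finset.not_nonempty_iff_eq_empty] at hA
      subst hA
      simp [hat, he]

theorem fan_unique [Finite W] [Fintype cs.CosetFace] (μ μ' : cs.CosetFace → ℝ)
    (h0 : 0 ≤ μ) (hch : ∀ X Y, μ X ≠ 0 → μ Y ≠ 0 → X ≤ Y ∨ Y ≤ X)
    (h0' : 0 ≤ μ') (hch' : ∀ X Y, μ' X ≠ 0 → μ' Y ≠ 0 → X ≤ Y ∨ Y ≤ X)
    (h : ∑ X, μ X • vv cs X = ∑ X, μ' X • vv cs X) : μ = μ' := by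
  obtain ⟨u, hu⟩ := exists_common cs μ hch
  obtain ⟨u', hu'⟩ := exists_common cs μ' hch'
  have hh := h
  rw [sum_hat cs u μ hu, sum_hat cs u' μ' hu'] at hh
  set c : B → ℝ := fun s => ∑ A, if s ∈ A then hat cs u μ A else 0 with hc
  set c' : B → ℝ := fun s => ∑ A, if s ∈ A then hat cs u' μ' A else 0 with hc'
  have hnn : ∀ (u : W) (μ : cs.CosetFace → ℝ), 0 ≤ μ →
      (0 : B → ℝ) ≤ fun s => ∑ A, if s ∈ A then hat cs u μ A else 0 := by
    intro u μ hμ s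
    refine Finset.sum_nonneg fun A _ => ?_
    split_ifs
    · exact hat_nonneg cs u μ hμ A
    · exact le_rfl
  have hst := act_stab cs _ (u'⁻¹ * u) c c' rfl (hnn u μ h0) (hnn u' μ' h0')
    (by rw [act_mul, hh, ← act_mul]; simp [act_one])
  obtain ⟨hcc, hmem⟩ := hst
  -- `u'` lies in every face of the support of `μ`
  have hu2 : ∀ X, μ X ≠ 0 → u' ∈ X.1 := by
    intro X hX
    rw [eq_of_mem cs X u (hu X hX), Set.mem_smul_set_iff_inv_smul_mem, smul_eq_mul]
    have hsub : {s | c s = 0} ⊆ fT cs X := by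
      intro s hs
      by_contra hsT
      have hsA : s ∈ fA cs X := by simp [fA, hsT]
      have hterm : (if s ∈ fA cs X then hat cs u μ (fA cs X) else 0) = 0 := by
        have hs' : ∑ A, (if s ∈ A then hat cs u μ A else 0) = 0 := hs
        rw [Finset.sum_eq_zero_iff_of_nonneg] at hs'
        · exact hs' _ (Finset.mem_univ _)
        · intro A _
          split_ifs
          · exact hat_nonneg cs u μ h0 A
          · exact le_rfl
      rw [if_pos hsA, hat, dif_pos (fA_nonempty cs X), face_fA cs X u (hu X hX)] at hterm
      exact hX hterm
    have := Subgroup.inv_mem _ (par_mono cs hsub hmem)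
    simpa using this
  have key : hat cs u' μ = hat cs u' μ' := by
    apply lc_unique _ _ (hat_nonneg cs u' μ h0) (hat_nonneg cs u' μ' h0')
      (hat_chain cs u' μ hch) (hat_chain cs u' μ' hch') (by simp [hat]) (by simp [hat])
    have h2 := h
    rw [sum_hat cs u' μ hu2, sum_hat cs u' μ' hu'] at h2
    have h3 := congrArg (act cs u'⁻¹) h2
    rw [← act_mul, ← act_mul] at h3
    simp only [inv_mul_cancel, act_one] at h3
    exact fun s => congrFun h3 s
  funext X
  by_cases hX : u' ∈ X.1
  · have := congrFun key (fA cs X)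
    rwa [hat, hat, dif_pos (fA_nonempty cs X), dif_pos (fA_nonempty cs X),
      face_fA cs X u' hX] at this
  · have e1 : μ X = 0 := by by_contra h; exact hX (hu2 X h)
    have e2 : μ' X = 0 := by by_contra h; exact hX (hu' X h)
    rw [e1, e2]

end Faces

end CoxSphere

namespace CoxSphere

section Top

open Opposite Simplicial

variable {P : Type} [PartialOrder P]

/-- a simplex of the nerve from a monotone map -/
def smp (n : ℕ) (σ : Fin (n + 1) →o P) : (nerve P).obj (op (SimplexCategory.mk n)) :=
  σ.monotone.functor

lemma smp_surj (n : ℕ) (x : (nerve P).obj (op (SimplexCategory.mk n))) :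
    ∃ σ : Fin (n + 1) →o P, x = smp n σ := by
  let F : Fin (n + 1) ⥤ P := x
  refine ⟨⟨F.obj, F.monotone⟩, ?_⟩
  change F = _
  exact CategoryTheory.Functor.ext (fun i => rfl) (fun _ _ _ => Subsingleton.elim _ _)

lemma smp_map {n k : ℕ} (σ : Fin (n + 1) →o P) (f : Fin (k + 1) →o Fin (n + 1)) :
    (nerve P).map (SimplexCategory.mkHom f).op (smp n σ) = smp k (σ.comp f) := by
  change CategoryTheory.Functor.comp _ _ = _
  exact CategoryTheory.Functor.ext (fun i => rfl) (fun _ _ _ => Subsingleton.elim _ _)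

/-- point of the realization -/
noncomputable def pt (n : ℕ) (σ : Fin (n + 1) →o P) (t : stdSimplex ℝ (Fin (n + 1))) :
    (SSet.toTop.obj (nerve P) : TopCat.{0}) :=
  SSet.toTop.map (SSet.yonedaEquiv.symm (smp n σ)) ((SimplexCategory.mk n).toTopHomeo.symm t)

lemma continuous_pt (n : ℕ) (σ : Fin (n + 1) →o P) : Continuous (pt n σ) := by
  unfold pt
  exact (SSet.toTop.map _).hom.continuous.comp (Homeomorph.continuous _)

lemma pt_map {n k : ℕ} (σ : Fin (n + 1) →o P) (f : Fin (k + 1) →o Fin (n + 1))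
    (t : stdSimplex ℝ (Fin (k + 1))) :
    pt n σ (stdSimplex.map f t) = pt k (σ.comp f) t := by
  have h := SimplexCategory.toTopHomeo_symm_naturality_apply.{0} (SimplexCategory.mkHom f) t
  have h2 : SSet.stdSimplex.map (SimplexCategory.mkHom f) ≫ SSet.yonedaEquiv.symm (smp n σ) =
      SSet.yonedaEquiv.symm (smp k (σ.comp f)) := by
    rw [← smp_map]
    exact (SSet.yonedaEquiv_symm_naturality_left _ _)
  unfold pt
  rw [← h2, Functor.map_comp]
  exact congrArg (SSet.toTop.map (SSet.yonedaEquiv.symm (smp n σ))) h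

lemma homEquiv_pt {Y : TopCat.{0}} (F : SSet.toTop.obj (nerve P) ⟶ Y) (n : ℕ)
    (σ : Fin (n + 1) →o P) (t : stdSimplex ℝ (Fin (n + 1))) :
    TopCat.toSSetObjEquiv Y _ ((sSetTopAdj.homEquiv _ _ F).app _ (smp n σ)) t = F (pt n σ t) := by
  have h := sSetTopAdj_unit_app_app_down (nerve P) _ (smp n σ)
  rw [Adjunction.homEquiv_unit]
  have h3 : ((sSetTopAdj.unit.app (nerve P) ≫ TopCat.toSSet.map F).app _ (smp n σ)).down =
    ((sSetTopAdj.unit.app (nerve P)).app _ (smp n σ)).down ≫ F := rfl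
  change (show SimplexCategory.toTop.{0}.obj (SimplexCategory.mk n) ⟶ Y from
    ((sSetTopAdj.unit.app (nerve P) ≫ TopCat.toSSet.map F).app _ (smp n σ)).down) (ULift.up t)
    = _
  rw [h3, h]
  rfl

lemma top_hom_ext {Y : TopCat.{0}} (F G : SSet.toTop.obj (nerve P) ⟶ Y)
    (h : ∀ n (σ : Fin (n + 1) →o P) t, F (pt n σ t) = G (pt n σ t)) : F = G := by
  apply (sSetTopAdj.homEquiv _ _).injective
  ext ⟨n⟩ x
  induction n using SimplexCategory.rec with
  | _ n =>
  obtain ⟨σ, rfl⟩ := smp_surj n x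
  apply (TopCat.toSSetObjEquiv Y _).injective
  ext t
  exact (homEquiv_pt F n σ t).trans ((h n σ t).trans (homEquiv_pt G n σ t).symm)

lemma pt_surj (a : (SSet.toTop.obj (nerve P) : TopCat.{0})) :
    ∃ n σ t, a = pt n σ t := by
  classical
  let Y : TopCat.{0} := @TopCat.of Prop ⊤
  let R : (SSet.toTop.obj (nerve P) : TopCat.{0}) → Prop := fun a => ∃ n σ t, a = pt n σ t
  let F : SSet.toTop.obj (nerve P) ⟶ Y :=
    @TopCat.ofHom _ Prop _ ⊤ (@ContinuousMap.mk _ _ _ ⊤ R continuous_top)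
  let G : SSet.toTop.obj (nerve P) ⟶ Y :=
    @TopCat.ofHom _ Prop _ ⊤ (@ContinuousMap.mk _ _ _ ⊤ (fun _ => True) continuous_top)
  have : F = G := by
    apply top_hom_ext
    intro n σ t
    change R _ = True
    exact eq_true ⟨n, σ, t, rfl⟩
  have h : R a = True := congrArg (fun F : SSet.toTop.obj (nerve P) ⟶ Y => F a) this
  exact of_eq_true h

variable {E : Type} [TopologicalSpace E] [AddCommGroup E] [Module ℝ E] [ContinuousAdd E]
  [ContinuousSMul ℝ E]

lemma sum_map {k n : ℕ} (f : Fin (k + 1) → Fin (n + 1)) (t : stdSimplex ℝ (Fin (k + 1)))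
    (g : Fin (n + 1) → E) : ∑ i, (stdSimplex.map f t) i • g i = ∑ j, t j • g (f j) := by
  classical
  simp only [stdSimplex.map_coe, FunOnFinite.linearMap_apply_apply, Finset.sum_smul]
  rw [← Finset.sum_fiberwise Finset.univ f]
  refine Finset.sum_congr rfl fun i _ => ?_
  refine Finset.sum_congr rfl fun j hj => ?_
  simp only [Finset.mem_filter, Finset.mem_univ, true_and] at hj
  rw [hj]

lemma exists_real (v : P → E) : ∃ F : C((SSet.toTop.obj (nerve P) : TopCat.{0}), E),
    ∀ n (σ : Fin (n + 1) →o P) t, F (pt n σ t) = ∑ i, t i • v (σ i) := by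
  let c : ∀ (n : SimplexCategory) (x : (nerve P).obj (op n)), C(stdSimplex ℝ (Fin (n.len + 1)), E) :=
    fun n x => ⟨fun t => ∑ i, t i • v ((show Fin (n.len + 1) ⥤ P from x).obj i), by
      refine continuous_finsetSum _ fun i _ => ?_
      refine Continuous.smul ?_ continuous_const
      exact (continuous_apply i).comp continuous_subtype_val⟩
  let g : nerve P ⟶ TopCat.toSSet.obj (TopCat.of E) :=
    { app := fun n => TypeCat.ofHom fun x => (TopCat.toSSetObjEquiv (TopCat.of E) n).symm (c n.unop x)
      naturality := by
        rintro ⟨n⟩ ⟨m⟩ ⟨f⟩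
        ext x
        apply (TopCat.toSSetObjEquiv (TopCat.of E) _).injective
        ext t
        refine Eq.trans ?_ (sum_map (f : Fin (m.len + 1) → Fin (n.len + 1)) t
          (fun i => v ((show Fin (n.len + 1) ⥤ P from x).obj i))).symm
        rfl }
  let F := (sSetTopAdj.homEquiv _ _).symm g
  refine ⟨F.hom, fun n σ t => ?_⟩
  have h := homEquiv_pt F n σ t
  simp only [F, Equiv.apply_symm_apply] at h
  exact h.symm

end Top

end CoxSphere

namespace CoxSphere

section Top2

variable {P : Type} [PartialOrder P]

lemma pt_canon (a : (SSet.toTop.obj (nerve P) : TopCat.{0})) :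
    ∃ n, ∃ σ : Fin (n + 1) →o P, ∃ t : stdSimplex ℝ (Fin (n + 1)),
      StrictMono σ ∧ (∀ i, t i ≠ 0) ∧ a = pt n σ t := by
  classical
  have hex : ∃ n, ∃ σ : Fin (n + 1) →o P, ∃ t, a = pt n σ t := pt_surj a
  obtain ⟨σ, t, hat⟩ := Nat.find_spec hex
  have hmin := fun m => Nat.find_min hex (m := m)
  generalize Nat.find hex = n at σ t hat hmin
  refine ⟨n, σ, t, ?_, ?_, hat⟩
  · obtain _ | m := n
    · intro i j hij
      exact absurd hij (by omega)
    · rw [Fin.strictMono_iff_lt_succ]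
      intro i
      refine lt_of_le_of_ne (σ.monotone (Fin.castSucc_le_succ i)) fun he => ?_
      let s : Fin (m + 1) →o Fin (m + 2) := ⟨i.succ.succAbove, (Fin.strictMono_succAbove _).monotone⟩
      let p : Fin (m + 2) →o Fin (m + 1) := ⟨i.predAbove, Fin.predAbove_right_monotone _⟩
      have hσ : σ = (σ.comp s).comp p := by
        ext j
        change σ j = σ (i.succ.succAbove (i.predAbove j))
        by_cases hj : j = i.succ
        · subst hj
          rw [Fin.predAbove_succ_self, Fin.succAbove_of_castSucc_lt _ _ (by simp [Fin.lt_def]), he]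
        · congr 1
          ext
          simp only [Fin.succAbove, Fin.predAbove]
          have hj2 : (j : ℕ) ≠ i + 1 := fun h => hj (Fin.ext (by simpa using h))
          split_ifs with h1 h2 h2 <;> simp [Fin.lt_def] at h1 h2 ⊢ <;> omega
      rw [hσ, ← pt_map] at hat
      exact hmin m (Nat.lt_succ_self m) ⟨_, _, hat⟩
  · intro i hi
    obtain _ | m := n
    · have h1 : ∑ j, t j = 1 := t.2.2
      rw [Fin.sum_univ_one] at h1
      rw [show i = 0 by omega] at hi
      rw [hi] at h1
      exact zero_ne_one h1
    · have hsum : ∑ j, t (i.succAbove j) = 1 := by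
        have h1 : ∑ j, t j = 1 := t.2.2
        rwa [Fin.sum_univ_succAbove _ i, hi, zero_add] at h1
      let t' : stdSimplex ℝ (Fin (m + 1)) := ⟨fun j => t (i.succAbove j), fun j => t.2.1 _, hsum⟩
      let s : Fin (m + 1) →o Fin (m + 2) := ⟨i.succAbove, (Fin.strictMono_succAbove _).monotone⟩
      have ht : t = stdSimplex.map s t' := by
        ext j
        rw [stdSimplex.map_coe, FunOnFinite.linearMap_apply_apply]
        by_cases hj : j = i
        · subst hj
          rw [hi, Finset.sum_eq_zero]
          intro x hx
          exact absurd (Finset.mem_filter.1 hx).2 (Fin.succAbove_ne _ _)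
        · obtain ⟨x, rfl⟩ := Fin.exists_succAbove_eq hj
          rw [Finset.sum_eq_single_of_mem x (by simp [s])]
          · rfl
          · intro b hb hbx
            exact absurd (Fin.succAbove_right_injective (Finset.mem_filter.1 hb).2) hbx
      rw [ht, pt_map] at hat
      exact hmin m (Nat.lt_succ_self m) ⟨_, _, hat⟩

open Classical in
/-- weights of a point -/
noncomputable def wt (n : ℕ) (σ : Fin (n + 1) →o P) (t : stdSimplex ℝ (Fin (n + 1))) (p : P) : ℝ :=
  ∑ i, if σ i = p then t i else 0

lemma wt_nonneg (n : ℕ) (σ : Fin (n + 1) →o P) (t : stdSimplex ℝ (Fin (n + 1))) : 0 ≤ wt n σ t := by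
  intro p
  refine Finset.sum_nonneg fun i _ => ?_
  split_ifs
  · exact t.2.1 i
  · exact le_rfl

lemma wt_apply {n : ℕ} {σ : Fin (n + 1) →o P} (hσ : StrictMono σ) (t : stdSimplex ℝ (Fin (n + 1)))
    (i : Fin (n + 1)) : wt n σ t (σ i) = t i := by
  classical
  unfold wt
  rw [Finset.sum_eq_single_of_mem i (Finset.mem_univ _)]
  · simp
  · intro j _ hj
    rw [if_neg fun h => hj (hσ.injective h)]

lemma wt_ne {n : ℕ} {σ : Fin (n + 1) →o P} {t : stdSimplex ℝ (Fin (n + 1))} {p : P}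
    (h : wt n σ t p ≠ 0) : ∃ i, σ i = p := by
  obtain ⟨i, -, hi⟩ := Finset.exists_ne_zero_of_sum_ne_zero h
  refine ⟨i, ?_⟩
  by_contra hc
  exact hi (if_neg hc)

lemma wt_chain {n : ℕ} {σ : Fin (n + 1) →o P} {t : stdSimplex ℝ (Fin (n + 1))} (p q : P)
    (hp : wt n σ t p ≠ 0) (hq : wt n σ t q ≠ 0) : p ≤ q ∨ q ≤ p := by
  obtain ⟨i, rfl⟩ := wt_ne hp
  obtain ⟨j, rfl⟩ := wt_ne hq
  exact (le_total i j).imp (fun h => σ.monotone h) (fun h => σ.monotone h)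

lemma wt_sum [Fintype P] {E : Type} [AddCommGroup E] [Module ℝ E] {n : ℕ} (σ : Fin (n + 1) →o P)
    (t : stdSimplex ℝ (Fin (n + 1))) (g : P → E) :
    ∑ p, wt n σ t p • g p = ∑ i, t i • g (σ i) := by
  classical
  simp only [wt, Finset.sum_smul]
  rw [Finset.sum_comm]
  simp [ite_smul]

lemma wt_sum_one [Fintype P] {n : ℕ} (σ : Fin (n + 1) →o P)
    (t : stdSimplex ℝ (Fin (n + 1))) : ∑ p, wt n σ t p = 1 := by
  have h := wt_sum σ t (fun _ => (1 : ℝ))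
  simp only [smul_eq_mul, mul_one] at h
  rw [h]
  exact t.2.2

lemma pt_eq_of_wt {n m : ℕ} {σ : Fin (n + 1) →o P} {τ : Fin (m + 1) →o P}
    {t : stdSimplex ℝ (Fin (n + 1))} {s : stdSimplex ℝ (Fin (m + 1))}
    (hσ : StrictMono σ) (hτ : StrictMono τ) (ht : ∀ i, t i ≠ 0) (hs : ∀ i, s i ≠ 0)
    (h : wt n σ t = wt m τ s) : pt n σ t = pt m τ s := by
  have hr : Set.range σ = Set.range τ := by
    apply Set.Subset.antisymm
    · rintro _ ⟨i, rfl⟩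
      apply wt_ne (t := s)
      rw [← h, wt_apply hσ]
      exact ht i
    · rintro _ ⟨i, rfl⟩
      apply wt_ne (t := t)
      rw [h, wt_apply hτ]
      exact hs i
  have hnm : n = m := by
    have h1 := Nat.card_congr (Equiv.ofInjective σ hσ.injective)
    have h2 := Nat.card_congr (Equiv.ofInjective τ hτ.injective)
    rw [hr, ← h2] at h1
    simpa using h1
  subst hnm
  have hst : σ = τ := by
    ext i
    exact congrFun ((hσ.range_inj hτ).1 hr) i
  subst hst
  congr 1
  ext i
  exact (wt_apply hσ t i).symm.trans ((congrFun h _).trans (wt_apply hσ s i))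

lemma exists_wt [Fintype P] (μ : P → ℝ) (h0 : 0 ≤ μ)
    (hch : ∀ p q, μ p ≠ 0 → μ q ≠ 0 → p ≤ q ∨ q ≤ p) (h1 : ∑ p, μ p = 1) :
    ∃ n, ∃ σ : Fin (n + 1) →o P, ∃ t, wt n σ t = μ := by
  classical
  let S := {p : P // μ p ≠ 0}
  let _ : LinearOrder S :=
    { (inferInstance : PartialOrder S) with
      le_total := fun p q => hch p.1 q.1 p.2 q.2
      toDecidableLE := Classical.decRel _ }
  have hne : Nonempty S := by
    obtain ⟨i, -, hi⟩ := Finset.exists_ne_zero_of_sum_ne_zero (h1.trans_ne one_ne_zero)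
    exact ⟨⟨i, hi⟩⟩
  obtain ⟨n, hn⟩ : ∃ n, Fintype.card S = n + 1 :=
    Nat.exists_eq_succ_of_ne_zero Fintype.card_ne_zero
  let e : Fin (n + 1) ≃o S := Fintype.orderIsoFinOfCardEq S hn
  let σ : Fin (n + 1) →o P := ⟨fun i => (e i).1, fun i j h => e.monotone h⟩
  have hinj : Function.Injective σ := fun i j h => e.injective (Subtype.ext h)
  have hσ2 : ∀ p (hp : μ p ≠ 0), σ (e.symm ⟨p, hp⟩) = p := fun p hp =>
    congrArg Subtype.val (e.apply_symm_apply ⟨p, hp⟩)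
  have hsum : ∑ i, μ (σ i) = 1 := by
    rw [← h1]
    refine Finset.sum_of_injOn σ hinj.injOn (by simp) ?_ (by simp)
    intro p _ hp
    by_contra hc
    exact hp ⟨e.symm ⟨p, hc⟩, by simp, hσ2 _ _⟩
  refine ⟨n, σ, ⟨fun i => μ (σ i), fun i => h0 _, hsum⟩, ?_⟩
  funext p
  by_cases hp : μ p = 0
  · rw [hp]
    refine Finset.sum_eq_zero fun i _ => ?_
    split_ifs with h
    · subst h
      exact hp
    · rfl
  · have hp2 : σ (e.symm ⟨p, hp⟩) = p := hσ2 _ _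
    have hs : StrictMono σ := σ.monotone.strictMono_of_injective hinj
    conv_lhs => rw [← hp2]
    rw [wt_apply hs]
    change μ (σ _) = _
    rw [hp2]

lemma compact_real [Fintype P] : CompactSpace (SSet.toTop.obj (nerve P) : TopCat.{0}) := by
  classical
  rw [← isCompact_univ_iff]
  have hu : (Set.univ : Set (SSet.toTop.obj (nerve P) : TopCat.{0})) =
      ⋃ x : (Σ k : Fin (Fintype.card P), Fin (k + 1) →o P), Set.range (pt x.1 x.2) := by
    symm
    rw [Set.eq_univ_iff_forall]
    intro a
    obtain ⟨n, σ, t, hσ, -, rfl⟩ := pt_canon a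
    have hn : n < Fintype.card P := by
      have := Fintype.card_le_of_injective σ hσ.injective
      rw [Fintype.card_fin] at this
      omega
    exact Set.mem_iUnion.2 ⟨⟨⟨n, hn⟩, σ⟩, t, rfl⟩
  rw [hu]
  have : ∀ k : ℕ, Finite (Fin (k + 1) →o P) := fun k =>
    Finite.of_injective (fun f : Fin (k + 1) →o P => (f : Fin (k + 1) → P)) DFunLike.coe_injective
  exact isCompact_iUnion fun x => isCompact_range (continuous_pt _ _)

theorem sphere_of_fan [Fintype P] {E : Type} [NormedAddCommGroup E] [NormedSpace ℝ E] (v : P → E)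
    (hex : ∀ x : E, ∃ μ : P → ℝ, 0 ≤ μ ∧ (∀ p q, μ p ≠ 0 → μ q ≠ 0 → p ≤ q ∨ q ≤ p) ∧
      ∑ p, μ p • v p = x)
    (huq : ∀ μ μ' : P → ℝ, 0 ≤ μ → (∀ p q, μ p ≠ 0 → μ q ≠ 0 → p ≤ q ∨ q ≤ p) →
      0 ≤ μ' → (∀ p q, μ' p ≠ 0 → μ' q ≠ 0 → p ≤ q ∨ q ≤ p) →
      ∑ p, μ p • v p = ∑ p, μ' p • v p → μ = μ') :
    Nonempty ((SSet.toTop.obj (nerve P) : TopCat.{0}) ≃ₜ Metric.sphere (0 : E) 1) := by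
  obtain ⟨F, hF⟩ := exists_real v
  have hF' : ∀ n (σ : Fin (n + 1) →o P) t, F (pt n σ t) = ∑ p, wt n σ t p • v p := fun n σ t => by
    rw [hF, wt_sum]
  have hne : ∀ a, F a ≠ 0 := by
    intro a h
    obtain ⟨n, σ, t, -, -, rfl⟩ := pt_canon a
    have h2 : wt n σ t = 0 := by
      refine huq _ 0 (wt_nonneg n σ t) wt_chain le_rfl (fun p q hp => absurd rfl hp) ?_
      rw [← hF', h]
      simp
    have h3 := wt_sum_one σ t
    rw [h2] at h3
    simp at h3
  have hpos : ∀ a, 0 < ‖F a‖ := fun a => norm_pos_iff.2 (hne a)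
  let G : (SSet.toTop.obj (nerve P) : TopCat.{0}) → Metric.sphere (0 : E) 1 := fun a =>
    ⟨‖F a‖⁻¹ • F a, by
      rw [mem_sphere_zero_iff_norm, norm_smul, norm_inv, norm_norm,
        inv_mul_cancel₀ (hpos a).ne']⟩
  have hG : Continuous G := by
    refine Continuous.subtype_mk ?_ _
    exact (F.continuous.norm.inv₀ fun a => (hpos a).ne').smul F.continuous
  have hinj : Function.Injective G := by
    intro a b hab
    have h1 : ‖F a‖⁻¹ • F a = ‖F b‖⁻¹ • F b := congrArg Subtype.val hab
    have hpa := hpos a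
    have hpb := hpos b
    obtain ⟨n, σ, t, hσ, ht, rfl⟩ := pt_canon a
    obtain ⟨m, τ, s, hτ, hs, rfl⟩ := pt_canon b
    set α := ‖F (pt n σ t)‖⁻¹
    set β := ‖F (pt m τ s)‖⁻¹
    have hα : 0 < α := inv_pos.2 hpa
    have hβ : 0 < β := inv_pos.2 hpb
    rw [hF', hF', Finset.smul_sum, Finset.smul_sum] at h1
    simp only [smul_smul] at h1
    have h2 : (fun p => α * wt n σ t p) = fun p => β * wt m τ s p := by
      refine huq _ _ (fun p => mul_nonneg hα.le (wt_nonneg n σ t p))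
        (fun p q hp hq => wt_chain p q (right_ne_zero_of_mul hp) (right_ne_zero_of_mul hq))
        (fun p => mul_nonneg hβ.le (wt_nonneg m τ s p))
        (fun p q hp hq => wt_chain p q (right_ne_zero_of_mul hp) (right_ne_zero_of_mul hq)) h1
    have h3 : α = β := by
      have h4 : ∑ p, α * wt n σ t p = ∑ p, β * wt m τ s p :=
        Finset.sum_congr rfl fun p _ => congrFun h2 p
      rwa [← Finset.mul_sum, ← Finset.mul_sum, wt_sum_one, wt_sum_one, mul_one, mul_one] at h4
    apply pt_eq_of_wt hσ hτ ht hs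
    funext p
    have h5 := congrFun h2 p
    simp only [h3] at h5
    exact mul_left_cancel₀ hβ.ne' h5
  have hsurj : Function.Surjective G := by
    rintro ⟨x, hx⟩
    rw [mem_sphere_zero_iff_norm] at hx
    obtain ⟨μ, h0, hch, hs⟩ := hex x
    set c := ∑ p, μ p with hc
    have hc0 : 0 < c := by
      refine lt_of_le_of_ne (Finset.sum_nonneg fun p _ => h0 p) fun h => ?_
      have h2 := (Finset.sum_eq_zero_iff_of_nonneg fun p _ => h0 p).1 (hc.symm.trans h.symm)
      rw [← hs, Finset.sum_eq_zero, norm_zero] at hx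
      · exact zero_ne_one hx
      · intro p hp
        rw [h2 p hp, zero_smul]
    obtain ⟨n, σ, t, hw⟩ := exists_wt (fun p => c⁻¹ * μ p)
      (fun p => mul_nonneg (inv_pos.2 hc0).le (h0 p))
      (fun p q hp hq => hch p q (right_ne_zero_of_mul hp) (right_ne_zero_of_mul hq))
      (by rw [← Finset.mul_sum, ← hc, inv_mul_cancel₀ hc0.ne'])
    refine ⟨pt n σ t, Subtype.ext ?_⟩
    change ‖F (pt n σ t)‖⁻¹ • F (pt n σ t) = x
    have hFx : F (pt n σ t) = c⁻¹ • x := by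
      rw [hF', hw, ← hs, Finset.smul_sum]
      simp only [smul_smul]
    rw [hFx, norm_smul, hx, mul_one, norm_inv, Real.norm_of_nonneg hc0.le, inv_inv, smul_smul,
      mul_inv_cancel₀ hc0.ne', one_smul]
  have := compact_real (P := P)
  exact ⟨Continuous.homeoOfEquivCompactToT2 (f := Equiv.ofBijective G ⟨hinj, hsurj⟩) hG⟩

end Top2

end CoxSphere

/-- For a finite Coxeter group `W` of rank `n = |S|`, the Coxeter complex
`X_W` is homeomorphic to the `(n-1)`-dimensional sphere. -/
theorem coxeterComplex_homeomorph_sphere {B W : Type} [Fintype B] [Nonempty B] [Group W]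
    [Finite W] {M : CoxeterMatrix B} (cs : CoxeterSystem M W) :
    Nonempty (cs.coxeterComplex ≃ₜ
      Metric.sphere (0 : EuclideanSpace ℝ (Fin (Fintype.card B))) 1) := by
  classical
  let _ : Fintype cs.CosetFace := Fintype.ofFinite _
  let e : (B → ℝ) ≃ₗ[ℝ] EuclideanSpace ℝ (Fin (Fintype.card B)) :=
    LinearEquiv.ofFinrankEq _ _ (by simp)
  have hsum : ∀ μ : cs.CosetFace → ℝ,
      ∑ X, μ X • e (CoxSphere.vv cs X) = e (∑ X, μ X • CoxSphere.vv cs X) := fun μ => by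
    simp only [map_sum, map_smul]
  refine CoxSphere.sphere_of_fan (P := cs.CosetFace) (fun X => e (CoxSphere.vv cs X)) ?_ ?_
  · intro x
    obtain ⟨μ, h0, hch, h⟩ := CoxSphere.fan_exists cs (e.symm x)
    refine ⟨μ, h0, hch, ?_⟩
    rw [hsum, h, e.apply_symm_apply]
  · intro μ μ' h0 hch h0' hch' h
    rw [hsum, hsum] at h
    exact CoxSphere.fan_unique cs μ μ' h0 hch h0' hch' (e.injective h)
end

section
/- If W is an infinite Coxeter group (with finite generating set S), then the Coxeter complex X_W is contractible. -/
open Pointwise CategoryTheory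

section partA1
section TopPart
open Finset

theorem CC.exists_retr {ι : Type} [Fintype ι] [DecidableEq ι] [Nontrivial ι] (k : ι) :
    ∃ r : (stdSimplex ℝ ι) × unitInterval → (stdSimplex ℝ ι) × unitInterval, Continuous r ∧
      (∀ p, (∃ j, j ≠ k ∧ p.1.1 j = 0) ∨ p.2 = 0 ∨ p.2 = 1 → r p = p) ∧
      (∀ p, (∃ j, j ≠ k ∧ (r p).1.1 j = 0) ∨ (r p).2 = 0 ∨ (r p).2 = 1) := by
  classical
  have hne : (univ.erase k : Finset ι).Nonempty := by
    obtain ⟨j, hj⟩ := exists_ne k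
    exact ⟨j, by simp [hj]⟩
  let u : (stdSimplex ℝ ι) → ℝ := fun x => (univ.erase k).inf' hne (fun j => x.1 j)
  have hu : Continuous u := by
    apply Continuous.finset_inf'_apply
    intro i _
    exact (continuous_apply i).comp continuous_subtype_val
  have hu0 : ∀ x, 0 ≤ u x := fun x => by
    apply Finset.le_inf'
    intro j _
    exact x.2.1 j
  have hule : ∀ x j, j ≠ k → u x ≤ x.1 j := fun x j hj =>
    Finset.inf'_le _ (by simp [hj])
  have hu1 : ∀ x, u x ≤ 1 := fun x => by
    obtain ⟨j, hj⟩ := hne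
    exact (hule x j (by simpa using hj)).trans (mem_Icc_of_mem_stdSimplex x.2 j).2
  have huex : ∀ x, ∃ j, j ≠ k ∧ x.1 j = u x := fun x => by
    obtain ⟨j, hj, h⟩ := Finset.exists_mem_eq_inf' hne (fun j => x.1 j)
    exact ⟨j, by simpa using hj, h.symm⟩
  let t : (stdSimplex ℝ ι) × unitInterval → ℝ := fun p => min (u p.1) (4 * min p.2.1 (1 - p.2.1))
  have ht : Continuous t := by fun_prop
  have ht0 : ∀ p, 0 ≤ t p := fun p => by
    have h1 := p.2.2.1
    have h2 := p.2.2.2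
    exact le_min (hu0 _) (mul_nonneg (by norm_num) (le_min h1 (by linarith)))
  let c : ℝ := ((univ.erase k : Finset ι).card : ℝ)
  let v : (stdSimplex ℝ ι) × unitInterval → ι → ℝ := fun p i =>
    if i = k then p.1.1 i + c * t p else p.1.1 i - t p
  have hv : ∀ p, v p ∈ stdSimplex ℝ ι := by
    intro p
    constructor
    · intro i
      simp only [v]
      split_ifs with h
      · have := p.1.2.1 i
        have := ht0 p
        positivity
      · have := hule p.1 i h
        have : t p ≤ u p.1 := min_le_left _ _
        linarith
    · have h1 : ∑ i, v p i = v p k + ∑ i ∈ univ.erase k, v p i :=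
        (Finset.add_sum_erase univ (v p) (mem_univ k)).symm
      have h2 : ∑ i, p.1.1 i = p.1.1 k + ∑ i ∈ univ.erase k, p.1.1 i :=
        (Finset.add_sum_erase univ (p.1.1) (mem_univ k)).symm
      have h3 : ∑ i ∈ univ.erase k, v p i = ∑ i ∈ univ.erase k, (p.1.1 i - t p) := by
        apply Finset.sum_congr rfl
        intro i hi
        simp only [mem_erase] at hi
        simp [v, hi.1]
      have h4 : ∑ i, p.1.1 i = 1 := p.1.2.2
      rw [h1, h3, Finset.sum_sub_distrib]
      simp only [v, if_true, Finset.sum_const, nsmul_eq_mul]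
      change _ + c * t p + (_ - c * t p) = 1
      linarith
  have hvc : Continuous v := by
    apply continuous_pi
    intro i
    by_cases h : i = k
    · simp only [v, h, if_true]
      have : Continuous fun p : (stdSimplex ℝ ι) × unitInterval => p.1.1 k :=
        (continuous_apply k).comp (continuous_subtype_val.comp continuous_fst)
      fun_prop
    · simp only [v, h, if_false]
      have : Continuous fun p : (stdSimplex ℝ ι) × unitInterval => p.1.1 i :=
        (continuous_apply i).comp (continuous_subtype_val.comp continuous_fst)
      fun_prop
  have hden : ∀ p : (stdSimplex ℝ ι) × unitInterval, 0 < 1 - u p.1 / 2 := fun p => by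
    have := hu1 p.1
    linarith
  let s : (stdSimplex ℝ ι) × unitInterval → ℝ := fun p => (p.2.1 - u p.1 / 4) / (1 - u p.1 / 2)
  have hs : Continuous s := by
    apply Continuous.div
    · fun_prop
    · fun_prop
    · intro p
      exact (hden p).ne'
  refine ⟨fun p => (⟨v p, hv p⟩, Set.projIcc 0 1 zero_le_one (s p)), ?_, ?_, ?_⟩
  · exact (hvc.subtype_mk _).prodMk (continuous_projIcc.comp hs)
  · intro p hp
    have tz : t p = 0 := by
      apply le_antisymm _ (ht0 p)
      rcases hp with ⟨j, hj, h0⟩ | h0 | h0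
      · exact (min_le_left _ _).trans ((hule p.1 j hj).trans h0.le)
      · exact (min_le_right _ _).trans (by simp [h0])
      · exact (min_le_right _ _).trans (by simp [h0])
    apply Prod.ext
    · apply Subtype.ext
      funext i
      simp [v, tz]
    · change Set.projIcc 0 1 zero_le_one (s p) = p.2
      rcases hp with ⟨j, hj, h0⟩ | h0 | h0
      · have : u p.1 = 0 := le_antisymm ((hule p.1 j hj).trans h0.le) (hu0 _)
        have : s p = p.2.1 := by simp [s, this]
        rw [this]
        exact Set.projIcc_val _ _
      · rw [h0]
        apply Set.projIcc_of_le_left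
        apply div_nonpos_of_nonpos_of_nonneg _ (hden p).le
        have := hu0 p.1
        simp [h0]
        linarith
      · rw [h0]
        apply Set.projIcc_of_right_le
        rw [le_div_iff₀ (hden p)]
        have := hu0 p.1
        simp [h0]
        linarith
  · intro p
    by_cases h : u p.1 ≤ 4 * min p.2.1 (1 - p.2.1)
    · left
      obtain ⟨j, hj, h0⟩ := huex p.1
      refine ⟨j, hj, ?_⟩
      have : t p = u p.1 := min_eq_left h
      simp [v, hj, this, h0]
    · right
      rw [not_le] at h
      rcases min_choice p.2.1 (1 - p.2.1) with h' | h'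
      · left
        refine Set.projIcc_of_le_left zero_le_one ?_
        apply div_nonpos_of_nonpos_of_nonneg _ (hden p).le
        rw [h'] at h
        linarith
      · right
        refine Set.projIcc_of_right_le zero_le_one ?_
        rw [le_div_iff₀ (hden p)]
        rw [h'] at h
        linarith

theorem CC.exists_collapse {n : ℕ} (S : Set (Fin n)) (hS : S.Nonempty) :
    ∃ f : Fin n →o Fin n, (∀ a ∈ S, f a = a) ∧ ∀ a, f a ∈ S := by
  classical
  have hfin : S.Finite := S.toFinite
  let F : Finset (Fin n) := S.toFinset
  have hF : F.Nonempty := by simpa [F] using hS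
  let g : Fin n → Fin n := fun a =>
    if h : (F.filter (· ≤ a)).Nonempty then (F.filter (· ≤ a)).max' h else F.min' hF
  have hg : ∀ a, g a ∈ F := by
    intro a
    simp only [g]
    split_ifs with h
    · exact (Finset.mem_filter.1 (Finset.max'_mem _ h)).1
    · exact Finset.min'_mem _ _
  refine ⟨⟨g, ?_⟩, ?_, fun a => by
    change g a ∈ S
    have := hg a
    simpa [F] using this⟩
  · intro a b hab
    by_cases ha : (F.filter (· ≤ a)).Nonempty
    · have hb : (F.filter (· ≤ b)).Nonempty :=
        ha.mono (fun x hx => by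
          simp only [Finset.mem_filter] at hx ⊢
          exact ⟨hx.1, hx.2.trans hab⟩)
      simp only [g, ha, hb, dif_pos]
      apply Finset.max'_subset
      intro x hx
      simp only [Finset.mem_filter] at hx ⊢
      exact ⟨hx.1, hx.2.trans hab⟩
    · have : g a = F.min' hF := by simp only [g, ha, dif_neg, not_false_eq_true]
      rw [this]
      exact Finset.min'_le _ _ (hg b)
  · intro a ha
    have h : (F.filter (· ≤ a)).Nonempty := ⟨a, by simp [F, ha]⟩
    change g a = a
    simp only [g, h, dif_pos]
    apply le_antisymm
    · exact (Finset.mem_filter.1 (Finset.max'_mem _ h)).2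
    · exact Finset.le_max' _ _ (by simp [F, ha])

end TopPart

end partA1

section partA2

theorem CC.path_lift {X ι : Type} [TopologicalSpace X] [Fintype ι] [DecidableEq ι] [Nontrivial ι] (k : ι)
    (G : ι → C(stdSimplex ℝ ι, C(unitInterval, X)))
    (hG : ∀ j j', j ≠ k → j' ≠ k → ∀ x : stdSimplex ℝ ι, x.1 j = 0 → x.1 j' = 0 → G j x = G j' x)
    (p : C(stdSimplex ℝ ι, X × X))
    (hp : ∀ j, j ≠ k → ∀ x : stdSimplex ℝ ι, x.1 j = 0 → (G j x 0, G j x 1) = p x) :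
    ∃ H : C(stdSimplex ℝ ι, C(unitInterval, X)),
      (∀ j, j ≠ k → ∀ x : stdSimplex ℝ ι, x.1 j = 0 → H x = G j x) ∧
      ∀ x, (H x 0, H x 1) = p x := by
  classical
  obtain ⟨r, hr, hr1, hr2⟩ := CC.exists_retr k
  let F : stdSimplex ℝ ι × unitInterval → X := fun q =>
    if h : ∃ j, j ≠ k ∧ q.1.1 j = 0 then G h.choose q.1 q.2
    else if q.2 = 0 then (p q.1).1 else (p q.1).2
  have F1 : ∀ j, j ≠ k → ∀ q : stdSimplex ℝ ι × unitInterval, q.1.1 j = 0 → F q = G j q.1 q.2 := by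
    intro j hj q h0
    have h : ∃ j, j ≠ k ∧ q.1.1 j = 0 := ⟨j, hj, h0⟩
    simp only [F, h, dif_pos]
    rw [hG _ _ h.choose_spec.1 hj _ h.choose_spec.2 h0]
  have F2 : ∀ q : stdSimplex ℝ ι × unitInterval, q.2 = 0 → F q = (p q.1).1 := by
    intro q h0
    by_cases h : ∃ j, j ≠ k ∧ q.1.1 j = 0
    · obtain ⟨j, hj, h1⟩ := h
      rw [F1 j hj q h1, ← hp j hj _ h1, h0]
    · simp only [F, h, dif_neg, h0, if_true, not_false_eq_true]
  have F3 : ∀ q : stdSimplex ℝ ι × unitInterval, q.2 = 1 → F q = (p q.1).2 := by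
    intro q h0
    by_cases h : ∃ j, j ≠ k ∧ q.1.1 j = 0
    · obtain ⟨j, hj, h1⟩ := h
      rw [F1 j hj q h1, ← hp j hj _ h1, h0]
    · simp only [F, h, dif_neg, h0, not_false_eq_true]
      simp
  let K : Option (Option {j : ι // j ≠ k}) → Set (stdSimplex ℝ ι × unitInterval) := fun o =>
    match o with
    | none => {q | q.2 = 0}
    | some none => {q | q.2 = 1}
    | some (some j) => {q | q.1.1 j.1 = 0}
  have hc : ∀ j, Continuous fun q : stdSimplex ℝ ι × unitInterval => q.1.1 j := fun j =>
    (continuous_apply j).comp (continuous_subtype_val.comp continuous_fst)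
  have hcont : ContinuousOn F (⋃ o, K o) := by
    apply LocallyFinite.continuousOn_iUnion (locallyFinite_of_finite K)
    · rintro (_ | _ | j)
      · exact isClosed_eq continuous_snd continuous_const
      · exact isClosed_eq continuous_snd continuous_const
      · exact isClosed_eq (hc j) continuous_const
    · rintro (_ | _ | j)
      · refine ContinuousOn.congr (f := fun q => (p q.1).1) ?_ (fun q hq => F2 q hq)
        exact Continuous.continuousOn (by fun_prop)
      · refine ContinuousOn.congr (f := fun q => (p q.1).2) ?_ (fun q hq => F3 q hq)
        exact Continuous.continuousOn (by fun_prop)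
      · refine ContinuousOn.congr (f := fun q => G j q.1 q.2) ?_ (fun q hq => F1 j j.2 q hq)
        exact Continuous.continuousOn (by fun_prop)
  have hFr : Continuous (F ∘ r) := by
    rw [← continuousOn_univ]
    refine hcont.comp hr.continuousOn ?_
    intro q _
    rw [Set.mem_iUnion]
    rcases hr2 q with ⟨j, hj, h⟩ | h | h
    · exact ⟨some (some ⟨j, hj⟩), h⟩
    · exact ⟨none, h⟩
    · exact ⟨some none, h⟩
  refine ⟨ContinuousMap.curry ⟨F ∘ r, hFr⟩, ?_, ?_⟩
  · intro j hj x hx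
    ext t
    change F (r (x, t)) = _
    rw [hr1 _ (Or.inl ⟨j, hj, hx⟩), F1 j hj _ hx]
  · intro x
    apply Prod.ext
    · change F (r (x, 0)) = _
      rw [hr1 _ (Or.inr (Or.inl rfl)), F2 _ rfl]
    · change F (r (x, 1)) = _
      rw [hr1 _ (Or.inr (Or.inr rfl)), F3 _ rfl]

/-- path evaluation -/
noncomputable def CC.ev (X : TopCat.{0}) :
    TopCat.of C(unitInterval, X) ⟶ TopCat.of (X × X) :=
  TopCat.ofHom ⟨fun γ => (γ 0, γ 1), by fun_prop⟩

theorem CC.stdSimplex_map_eq_zero {α β : Type} [Fintype α] [Fintype β] [DecidableEq β]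
    (f : α → β) (x : stdSimplex ℝ α) (j : β) (h : ∀ a, f a ≠ j) :
    (stdSimplex.map f x).1 j = 0 := by
  change (stdSimplex.map f x) j = 0
  rw [stdSimplex.map_coe, FunOnFinite.linearMap_apply_apply]
  apply Finset.sum_eq_zero
  intro a ha
  simp at ha
  exact (h a ha).elim

theorem CC.stdSimplex_map_eq_self {α : Type} [Fintype α] [DecidableEq α]
    (f : α → α) (x : stdSimplex ℝ α) (h : ∀ a, x.1 a ≠ 0 → f a = a) :
    stdSimplex.map f x = x := by
  apply Subtype.ext
  funext j
  change (stdSimplex.map f x) j = x.1 j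
  rw [stdSimplex.map_coe, FunOnFinite.linearMap_apply_apply]
  by_cases hj : x.1 j = 0
  · rw [hj]
    apply Finset.sum_eq_zero
    intro a ha
    simp at ha
    by_contra h0
    have := h a h0
    rw [ha] at this
    subst this
    exact h0 hj
  · rw [Finset.sum_eq_single_of_mem j (by simpa using h j hj)]
    · rfl
    · intro b hb hne
      simp at hb
      by_contra h0
      exact hne ((h b h0).symm.trans hb)

end partA2

section partA2b

open Simplicial Opposite in
theorem CC.ev_horn (T : TopCat.{0}) (n : ℕ) (k : Fin (n + 2)) :
    HasLiftingProperty (SSet.horn.{0} (n + 1) k).ι (TopCat.toSSet.map (CC.ev T)) := by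
  classical
  constructor
  intro g b sq
  let E := TopCat.toSSetObjEquiv (TopCat.of C(unitInterval, T))
  let E' := TopCat.toSSetObjEquiv (TopCat.of (T × T))
  have mh : ∀ {m : ℕ} (φ : ⦋m⦌ ⟶ ⦋n + 1⦌) (j : Fin (n + 2)), j ≠ k → (∀ a, φ a ≠ j) →
      SSet.stdSimplex.objEquiv.symm φ ∈ (SSet.horn.{0} (n + 1) k).obj (op ⦋m⦌) := by
    intro m φ j hj h
    rw [SSet.mem_horn_iff_notMem_range]
    refine ⟨j, hj, ?_⟩
    rintro ⟨a, ha⟩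
    exact h a ha
  let val : ∀ {m : ℕ} (φ : ⦋m⦌ ⟶ ⦋n + 1⦌)
    (h : SSet.stdSimplex.objEquiv.symm φ ∈ (SSet.horn.{0} (n + 1) k).obj (op ⦋m⦌)),
    C(stdSimplex ℝ (Fin (m + 1)), C(unitInterval, T)) := fun {m} φ h =>
      E (op ⦋m⦌) (g.app (op ⦋m⦌) ⟨SSet.stdSimplex.objEquiv.symm φ, h⟩)
  have hval : ∀ {m m' : ℕ} (ψ : ⦋m'⦌ ⟶ ⦋m⦌) (φ : ⦋m⦌ ⟶ ⦋n + 1⦌) h h' y,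
      val (ψ ≫ φ) h y = val φ h' (stdSimplex.map ψ y) := by
    intro m m' ψ φ h h' y
    have := TopCat.toSSetObjEquiv_naturality_apply ψ
      (g.app (op ⦋m⦌) ⟨SSet.stdSimplex.objEquiv.symm φ, h'⟩) y
    refine Eq.trans ?_ this
    change E (op ⦋m'⦌) _ y = E (op ⦋m'⦌) _ y
    congr 2
    exact ConcreteCategory.congr_hom (g.naturality ψ.op)
      (⟨SSet.stdSimplex.objEquiv.symm φ, h'⟩ : (SSet.horn.{0} (n + 1) k).toSSet.obj (op ⦋m⦌))
  let pp : C(stdSimplex ℝ (Fin (n + 2)), T × T) := E' (op ⦋n + 1⦌) (SSet.yonedaEquiv b)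
  have hex : ∀ j : Fin (n + 2), ∃ f : Fin (n + 2) →o Fin (n + 2), (∀ a ∈ ({j}ᶜ : Set _), f a = a) ∧
      ∀ a, f a ∈ ({j}ᶜ : Set _) := by
    intro j
    apply CC.exists_collapse
    obtain ⟨a, ha⟩ := exists_ne j
    exact ⟨a, ha⟩
  choose f hf1 hf2 using hex
  let fh : ∀ j : Fin (n + 2), ⦋n + 1⦌ ⟶ ⦋n + 1⦌ := fun j => SimplexCategory.Hom.mk (f j)
  let G : Fin (n + 2) → C(stdSimplex ℝ (Fin (n + 2)), C(unitInterval, T)) := fun j =>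
    if hj : j ≠ k then val (fh j) (mh (fh j) j hj (hf2 j)) else
      ContinuousMap.const _ (ContinuousMap.const _ (pp ⟨Pi.single 0 1, single_mem_stdSimplex _ _⟩).1)
  have hGv : ∀ (j) (hj : j ≠ k), G j = val (fh j) (mh (fh j) j hj (hf2 j)) := fun j hj => by
    simp only [G]; exact dif_pos hj
  have aux : ∀ {m : ℕ} (φ φ' : ⦋m⦌ ⟶ ⦋n + 1⦌) (_ : φ = φ') h1 h2, val φ h1 = val φ' h2 := by
    rintro m _ _ rfl _ _
    rfl
  have key : ∀ {m : ℕ} (φ : ⦋m⦌ ⟶ ⦋n + 1⦌) (j : Fin (n + 2)) (_ : j ≠ k) (_ : ∀ a, φ a ≠ j) h y,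
      G j (stdSimplex.map φ y) = val φ h y := by
    intro m φ j hj hφ h y
    rw [hGv j hj]
    have e : φ ≫ fh j = φ := by
      ext a : 3
      exact hf1 j _ (hφ a)
    rw [← hval φ (fh j) (by rw [e]; exact h)]
    rw [aux _ _ e _ h]
  have bval : ∀ {m : ℕ} (φ : ⦋m⦌ ⟶ ⦋n + 1⦌) y,
      E' (op ⦋m⦌) (b.app (op ⦋m⦌) (SSet.stdSimplex.objEquiv.symm φ)) y = pp (stdSimplex.map φ y) := by
    intro m φ y
    have := TopCat.toSSetObjEquiv_naturality_apply φ (SSet.yonedaEquiv b) y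
    refine Eq.trans ?_ this
    change E' _ _ y = E' _ _ y
    congr 2
    have h2 := ConcreteCategory.congr_hom (b.naturality φ.op) (SSet.stdSimplex.objEquiv.symm (𝟙 _))
    refine Eq.trans ?_ h2
    change b.app _ _ = b.app _ _
    congr 1
    change _ = SSet.stdSimplex.objEquiv.symm (φ ≫ 𝟙 _)
    rw [Category.comp_id]
  have gb : ∀ {m : ℕ} (φ : ⦋m⦌ ⟶ ⦋n + 1⦌) h y,
      (val φ h y 0, val φ h y 1) = pp (stdSimplex.map φ y) := by
    intro m φ h y
    rw [← bval φ y]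
    have h2 := ConcreteCategory.congr_hom (NatTrans.congr_app sq.w (op ⦋m⦌)) ⟨_, h⟩
    have h3 := congrArg (fun z => E' (op ⦋m⦌) z y) h2
    exact h3
  obtain ⟨H, H1, H2⟩ := CC.path_lift (X := T) k G (by
    intro j j' hj hj' x h0 h0'
    obtain ⟨fS, hS1, hS2⟩ := CC.exists_collapse {a | x.1 a ≠ 0} (by
      by_contra hne
      rw [Set.not_nonempty_iff_eq_empty] at hne
      have h1 : ∑ i, x.1 i = 1 := x.2.2
      rw [Finset.sum_eq_zero] at h1
      · norm_num at h1
      · intro i _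
        by_contra h
        have : i ∈ ({a | x.1 a ≠ 0} : Set _) := h
        rw [hne] at this
        exact this)
    have hx : stdSimplex.map fS x = x := CC.stdSimplex_map_eq_self _ _ (fun a ha => hS1 a ha)
    let φ : ⦋n + 1⦌ ⟶ ⦋n + 1⦌ := SimplexCategory.Hom.mk fS
    have hφ : ∀ j, x.1 j = 0 → ∀ a, φ a ≠ j := by
      intro j hj a ha
      exact hS2 a (by
        have : fS a = j := ha
        rw [this]
        exact hj)
    have hm := mh φ j hj (hφ j h0)
    have k1 := key φ j hj (hφ j h0) hm x
    have k2 := key φ j' hj' (hφ j' h0') hm x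
    have hx' : stdSimplex.map φ x = x := hx
    rw [hx'] at k1 k2
    rw [k1, k2]) pp (by
    intro j hj x h0
    rw [hGv j hj, gb]
    congr 1
    refine CC.stdSimplex_map_eq_self _ _ (fun a ha => hf1 j a ?_)
    rintro rfl
    exact ha h0)
  refine ⟨⟨⟨SSet.yonedaEquiv.symm ((E (op ⦋n + 1⦌)).symm H), ?_, ?_⟩⟩⟩
  · ext m ⟨s, hs⟩
    obtain ⟨m⟩ := m
    induction m using SimplexCategory.rec with | _ m
    obtain ⟨φ, rfl⟩ := SSet.stdSimplex.objEquiv.symm.surjective s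
    apply (E (op ⦋m⦌)).injective
    ext1 y
    have hs' := hs
    rw [SSet.mem_horn_iff_notMem_range] at hs'
    obtain ⟨j, hj, hjr⟩ := hs'
    have hjr' : ∀ a, φ a ≠ j := fun a ha => hjr ⟨a, ha⟩
    have k1 := key φ j hj hjr' hs y
    rw [← H1 j hj _ (CC.stdSimplex_map_eq_zero _ _ _ hjr')] at k1
    exact k1
  · apply SSet.yonedaEquiv.injective
    apply (E' (op ⦋n + 1⦌)).injective
    ext1 y
    refine Eq.trans ?_ (H2 y)
    have h4 : SSet.yonedaEquiv (SSet.yonedaEquiv.symm ((E (op ⦋n + 1⦌)).symm H) ≫ TopCat.toSSet.map (CC.ev T))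
      = (TopCat.toSSet.map (CC.ev T)).app _ ((E (op ⦋n + 1⦌)).symm H) := by
      rw [SSet.yonedaEquiv_comp, Equiv.apply_symm_apply]
    rw [h4]
    rfl

theorem CC.ev_rlp (T : TopCat.{0}) :
    SSet.modelCategoryQuillen.J.{0}.rlp (TopCat.toSSet.map (CC.ev T)) := by
  rintro A B i hi
  simp only [SSet.modelCategoryQuillen.J, MorphismProperty.iSup_iff] at hi
  obtain ⟨n, ⟨k⟩⟩ := hi
  exact CC.ev_horn T n k

end partA2b

section partA3

theorem CC.contractible_aux (K A : SSet.{0}) (i : A ⟶ K) (hi : SSet.anodyneExtensions i)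
    (t : SSet.toTop.obj K) (ht : ∀ a : SSet.toTop.obj A, SSet.toTop.map i a = t) :
    ContractibleSpace (SSet.toTop.obj K) := by
  let X := SSet.toTop.obj K
  let cp : X ⟶ TopCat.of C(unitInterval, X) :=
    TopCat.ofHom ⟨fun x => ContinuousMap.const _ x, ContinuousMap.continuous_const'⟩
  let pt : X ⟶ TopCat.of (X × X) := TopCat.ofHom ⟨fun x => (x, t), by fun_prop⟩
  have hlift : HasLiftingProperty i (TopCat.toSSet.map (CC.ev X)) := by
    rw [SSet.anodyneExtensions_eq_llp_rlp] at hi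
    exact hi _ (CC.ev_rlp X)
  have nat : i ≫ sSetTopAdj.unit.app K = sSetTopAdj.unit.app A ≫ TopCat.toSSet.map (SSet.toTop.map i) :=
    sSetTopAdj.unit.naturality i
  have hsq : SSet.toTop.map i ≫ cp ≫ CC.ev X = SSet.toTop.map i ≫ pt := by
    ext1 a
    change ((SSet.toTop.map i a, SSet.toTop.map i a) : X × X) = (SSet.toTop.map i a, t)
    rw [ht]
  have sq : CommSq (i ≫ sSetTopAdj.unit.app K ≫ TopCat.toSSet.map cp) i
      (TopCat.toSSet.map (CC.ev X)) (sSetTopAdj.unit.app K ≫ TopCat.toSSet.map pt) := by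
    constructor
    rw [reassoc_of% nat, reassoc_of% nat, Category.assoc, Category.assoc,
      ← Functor.map_comp, ← Functor.map_comp, ← Functor.map_comp, hsq]
  let L := sq.lift
  let h : X ⟶ TopCat.of C(unitInterval, X) := (sSetTopAdj.homEquiv _ _).symm L
  have hh : h ≫ CC.ev X = pt := by
    apply (sSetTopAdj.homEquiv _ _).injective
    rw [Adjunction.homEquiv_naturality_right, Equiv.apply_symm_apply, sq.fac_right]
    rw [Adjunction.homEquiv_unit]
  have hx : ∀ x : X, (h x) 0 = x ∧ (h x) 1 = t := by
    intro x
    have := ConcreteCategory.congr_hom hh x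
    exact Prod.ext_iff.1 this
  rw [contractible_iff_id_nullhomotopic]
  refine ⟨t, ⟨⟨⟨fun p => h p.2 p.1, ?_⟩, ?_, ?_⟩⟩⟩
  · have : Continuous (fun x : X => h x) := h.hom.continuous
    fun_prop
  · intro x
    exact (hx x).1
  · intro x
    exact (hx x).2

open Simplicial in
theorem CC.contractible_of (K A : SSet.{0}) (i : A ⟶ K) (hi : SSet.anodyneExtensions i)
    (π : A ⟶ Δ[0]) (x0 : Δ[0] ⟶ K) (h : i = π ≫ x0) :
    ContractibleSpace (SSet.toTop.obj K) := by
  have e : SSet.toTop.obj Δ[0] ≅ SimplexCategory.toTop.obj ⦋0⦌ := SSet.toTopSimplex.app ⦋0⦌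
  let E := TopCat.homeoOfIso e
  have hs : Subsingleton (SSet.toTop.obj Δ[0]) := by
    have : Subsingleton (SimplexCategory.toTop.{0}.obj ⦋0⦌) := by
      infer_instance
    exact E.injective.subsingleton
  have hn : Nonempty (SimplexCategory.toTop.{0}.obj ⦋0⦌) := by infer_instance
  let q := E.symm hn.some
  refine CC.contractible_aux K A i hi (SSet.toTop.map x0 q) ?_
  intro a
  rw [h, Functor.map_comp]
  change SSet.toTop.map x0 (SSet.toTop.map π a) = _
  rw [Subsingleton.elim (SSet.toTop.map π a) q]

end partA3

section partA4

open Simplicial Opposite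

namespace CC

variable {P : Type} [PartialOrder P]

/-- vertex map of a simplex of the nerve -/
def vtx (x : (nerve P).N) (i : Fin (x.dim + 1)) : P := x.simplex.obj i

theorem vtx_strictMono (x : (nerve P).N) : StrictMono (vtx x) :=
  (PartialOrder.mem_nerve_nonDegenerate_iff_strictMono _).1 x.nonDegenerate

open Classical in
/-- vertex set of a simplex of the nerve -/
noncomputable def vset (x : (nerve P).N) : Finset P := Finset.univ.image (vtx x)

theorem mem_vset (x : (nerve P).N) (p : P) : p ∈ vset x ↔ ∃ i, vtx x i = p := by
  simp [vset]

theorem card_vset (x : (nerve P).N) : (vset x).card = x.dim + 1 := by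
  classical
  rw [vset, Finset.card_image_of_injective _ (vtx_strictMono x).injective]
  simp

theorem isChain_vset (x : (nerve P).N) : IsChain (· ≤ ·) (vset x : Set P) := by
  rintro a ha b hb _
  simp only [Finset.mem_coe, mem_vset] at ha hb
  obtain ⟨i, rfl⟩ := ha
  obtain ⟨j, rfl⟩ := hb
  rcases le_total i j with h | h
  · left; exact (vtx_strictMono x).monotone h
  · right; exact (vtx_strictMono x).monotone h

theorem nonempty_vset (x : (nerve P).N) : (vset x).Nonempty := by
  rw [← Finset.card_pos, card_vset]
  omega

theorem nerve_ext {n : ℕ} (s t : (nerve P) _⦋n⦌) (h : ∀ i, s.obj i = t.obj i) : s = t := by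
  ext i
  exact h i

theorem vset_subset_iff (x y : (nerve P).N) : vset x ⊆ vset y ↔ x ≤ y := by
  rw [SSet.N.le_iff_exists_mono]
  constructor
  · intro h
    have h1 : ∀ i, ∃ j, vtx y j = vtx x i := by
      intro i
      have := h ((mem_vset x _).2 ⟨i, rfl⟩)
      rwa [mem_vset] at this
    choose f hf using h1
    have hfm : StrictMono f := by
      intro i j hij
      rw [← (vtx_strictMono y).lt_iff_lt, hf, hf]
      exact vtx_strictMono x hij
    refine ⟨SimplexCategory.Hom.mk ⟨f, hfm.monotone⟩, ?_, ?_⟩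
    · rw [SimplexCategory.mono_iff_injective]
      exact hfm.injective
    · apply nerve_ext
      intro i
      exact hf i
  · rintro ⟨f, _, hf⟩ p hp
    rw [mem_vset] at hp ⊢
    obtain ⟨i, rfl⟩ := hp
    refine ⟨f i, ?_⟩
    have : ((nerve P).map f.op y.simplex).obj i = x.simplex.obj i := by rw [hf]
    exact this

theorem vset_injective : Function.Injective (vset (P := P)) := by
  intro x y h
  apply le_antisymm
  · rw [← vset_subset_iff, h]
  · rw [← vset_subset_iff, h]

theorem vset_surjective (σ : Finset P) (h0 : σ.Nonempty) (hσ : IsChain (· ≤ ·) (σ : Set P)) :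
    ∃ x : (nerve P).N, vset x = σ := by
  classical
  obtain ⟨n, hn⟩ : ∃ n, σ.card = n + 1 := ⟨σ.card - 1, by have := h0.card_pos; omega⟩
  let _ : LinearOrder σ :=
    { (inferInstance : PartialOrder σ) with
      le_total := fun a b => by
        rcases eq_or_ne a b with h | h
        · left; rw [h]
        · exact hσ a.2 b.2 (fun h' => h (Subtype.ext h'))
      toDecidableLE := Classical.decRel _ }
  let e : Fin (n + 1) ≃o σ := Fintype.orderIsoFinOfCardEq σ (by simpa using hn)
  have hm : StrictMono fun i => (e i).1 := fun i j hij => (e.strictMono hij)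
  let s : (nerve P) _⦋n⦌ := hm.monotone.functor
  have hs : s ∈ (nerve P).nonDegenerate n :=
    (PartialOrder.mem_nerve_nonDegenerate_iff_strictMono _).2 hm
  refine ⟨SSet.N.mk s hs, ?_⟩
  ext p
  rw [mem_vset]
  constructor
  · rintro ⟨i, rfl⟩
    exact (e i).2
  · intro hp
    refine ⟨e.symm ⟨p, hp⟩, ?_⟩
    change (e (e.symm ⟨p, hp⟩)).1 = p
    simp

theorem codim_one (x y : (nerve P).N) (h : vset x ⊆ vset y)
    (hc : (vset y).card = (vset x).card + 1) : SSet.S.IsUniquelyCodimOneFace x.toS y.toS := by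
  rw [card_vset, card_vset] at hc
  refine ⟨by omega, ?_⟩
  rw [vset_subset_iff, SSet.N.le_iff_exists_mono] at h
  obtain ⟨f, hf, hfx⟩ := h
  refine ⟨f, ⟨hf, hfx⟩, ?_⟩
  rintro g ⟨_, hg⟩
  ext i : 3
  apply (vtx_strictMono y).injective
  have h1 : ((nerve P).map f.op y.simplex).obj i = x.simplex.obj i := by rw [hfx]
  have h2 : ((nerve P).map g.op y.simplex).obj i = x.simplex.obj i := by rw [hg]
  exact h2.trans h1.symm

/-- the vertex subcomplex -/
def ptc (p0 : P) : (nerve P).Subcomplex where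
  obj n := {s | ∀ i, s.obj i = p0}
  map f := by
    intro s hs i
    exact hs _

theorem ptc_notMem_iff (p0 : P) (x : (nerve P).N) :
    x.simplex ∉ (ptc p0).obj _ ↔ vset x ≠ {p0} := by
  rw [not_iff_not]
  constructor
  · intro h
    ext p
    rw [mem_vset, Finset.mem_singleton]
    constructor
    · rintro ⟨i, rfl⟩
      exact h i
    · rintro rfl
      exact ⟨0, h 0⟩
  · intro h i
    have : vtx x i ∈ vset x := (mem_vset _ _).2 ⟨i, rfl⟩
    rw [h, Finset.mem_singleton] at this
    exact this

theorem contractible_of_ptc (p0 : P) (h : SSet.anodyneExtensions (ptc p0).ι) :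
    ContractibleSpace (SSet.toTop.obj (nerve P)) := by
  let s0 : (nerve P) _⦋0⦌ := (monotone_const (c := p0)).functor
  refine contractible_of _ _ _ h (SSet.stdSimplex.isTerminalObj₀.from _) (SSet.yonedaEquiv.symm s0) ?_
  ext m ⟨s, hs⟩ i
  exact hs i

theorem matching (p0 : P) (τ : Finset P → P) {α : Type} [PartialOrder α] [WellFoundedLT α]
    (ρ : Finset P → α)
    (h1 : ∀ σ : Finset P, σ.Nonempty → IsChain (· ≤ ·) (σ : Set P) → σ ≠ {p0} → ∀ a ∈ σ,
      a ≤ τ σ ∨ τ σ ≤ a)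
    (h2 : ∀ [DecidableEq P] (σ : Finset P), σ.Nonempty → IsChain (· ≤ ·) (σ : Set P) → σ ≠ {p0} →
      τ σ ∉ σ → τ (insert (τ σ) σ) = τ σ)
    (h3 : ∀ [DecidableEq P] (σ : Finset P), σ.Nonempty → IsChain (· ≤ ·) (σ : Set P) → σ ≠ {p0} →
      τ σ ∈ σ →
      (σ.erase (τ σ)).Nonempty ∧ σ.erase (τ σ) ≠ {p0} ∧ τ (σ.erase (τ σ)) = τ σ)
    (h4 : ∀ [DecidableEq P] (σ : Finset P), σ.Nonempty → IsChain (· ≤ ·) (σ : Set P) → σ ≠ {p0} →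
      τ σ ∉ σ →
      ∀ z ∈ σ, insert (τ σ) (σ.erase z) ≠ {p0} →
        τ (insert (τ σ) (σ.erase z)) ∉ insert (τ σ) (σ.erase z) →
        ρ (insert (τ σ) (σ.erase z)) < ρ σ) :
    ContractibleSpace (SSet.toTop.obj (nerve P)) := by
  classical
  apply contractible_of_ptc p0
  let v : (ptc p0).N → Finset P := fun x => vset x.toN
  have v1 : ∀ x, (v x).Nonempty := fun x => nonempty_vset _
  have v2 : ∀ x, IsChain (· ≤ ·) (v x : Set P) := fun x => isChain_vset _
  have v3 : ∀ x, v x ≠ {p0} := fun x => (ptc_notMem_iff p0 x.toN).1 x.notMem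
  have vinj : Function.Injective v := by
    intro x y h
    rw [SSet.Subcomplex.N.ext_iff]
    exact vset_injective h
  have vsurj : ∀ σ : Finset P, σ.Nonempty → IsChain (· ≤ ·) (σ : Set P) → σ ≠ {p0} →
      ∃ x, v x = σ := by
    intro σ a b c
    obtain ⟨x, rfl⟩ := vset_surjective σ a b
    exact ⟨SSet.Subcomplex.N.mk' x ((ptc_notMem_iff p0 x).2 c), rfl⟩
  have hp : ∀ x : (ptc p0).N, τ (v x) ∉ v x → ∃ y, v y = insert (τ (v x)) (v x) := by
    intro x hx
    apply vsurj
    · exact Finset.insert_nonempty _ _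
    · rw [Finset.coe_insert]
      apply (v2 x).insert
      intro b hb _
      exact (h1 _ (v1 x) (v2 x) (v3 x) b hb).symm
    · intro h
      have := congrArg Finset.card h
      rw [Finset.card_insert_of_notMem hx, Finset.card_singleton] at this
      have := (v1 x).card_pos
      omega
  choose! q hq using hp
  let II : Set (ptc p0).N := {x | τ (v x) ∉ v x}
  have hqI : ∀ x ∈ II, q x ∈ IIᶜ := by
    intro x hx
    simp only [II, Set.mem_compl_iff, Set.mem_setOf_eq, not_not]
    rw [hq x hx, h2 _ (v1 x) (v2 x) (v3 x) hx]
    exact Finset.mem_insert_self _ _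
  let q' : II → (IIᶜ : Set _) := fun x => ⟨q x.1, hqI x.1 x.2⟩
  have hbij : Function.Bijective q' := by
    constructor
    · rintro ⟨x, hx⟩ ⟨y, hy⟩ hxy
      have h : q x = q y := congrArg Subtype.val hxy
      have h' : insert (τ (v x)) (v x) = insert (τ (v y)) (v y) := by
        rw [← hq x hx, ← hq y hy, h]
      have ht : τ (v x) = τ (v y) := by
        rw [← h2 _ (v1 x) (v2 x) (v3 x) hx, ← h2 _ (v1 y) (v2 y) (v3 y) hy, h']
      apply Subtype.ext
      apply vinj
      change v x = v y
      rw [← Finset.erase_insert hx, h', ht, Finset.erase_insert hy]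
    · rintro ⟨y, hy⟩
      simp only [II, Set.mem_compl_iff, Set.mem_setOf_eq, not_not] at hy
      obtain ⟨a, b, c⟩ := h3 _ (v1 y) (v2 y) (v3 y) hy
      obtain ⟨x, hx⟩ := vsurj _ a ((v2 y).mono (by simp)) b
      have hxII : x ∈ II := by
        change τ (v x) ∉ v x
        rw [hx, c]
        exact Finset.notMem_erase _ _
      refine ⟨⟨x, hxII⟩, ?_⟩
      apply Subtype.ext
      apply vinj
      change v (q x) = v y
      rw [hq x hxII, hx, c, Finset.insert_erase hy]
  let Q : (ptc p0).Pairing :=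
    { I := IIᶜ
      II := II
      inter := by simp
      union := by simp
      p := Equiv.ofBijective q' hbij }
  have hproper : Q.IsProper := by
    constructor
    rintro ⟨x, hx⟩
    have e : v (q x) = _ := hq x hx
    apply codim_one x.toN (q x).toN
    · change v x ⊆ v (q x)
      rw [e]
      exact Finset.subset_insert _ _
    · change (v (q x)).card = (v x).card + 1
      rw [e, Finset.card_insert_of_notMem hx]
  let R : Q.WeakRankFunction α :=
    { rank := fun x => ρ (v x.1)
      lt := by
        rintro ⟨x, hx⟩ ⟨y, hy⟩ ⟨hne, hlt⟩ hdim
        have hle : x.toN ≤ (q y).toN := le_of_lt hlt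
        rw [← vset_subset_iff] at hle
        change v x ⊆ v (q y) at hle
        rw [hq y hy] at hle
        have hc : (v x).card = (v y).card := by
          change (vset _).card = (vset _).card
          rw [card_vset, card_vset]
          exact congrArg (· + 1) hdim
        have hc2 : (insert (τ (v y)) (v y) \ v x).card = 1 := by
          rw [Finset.card_sdiff_of_subset hle, Finset.card_insert_of_notMem hy, hc]
          omega
        obtain ⟨z, hz⟩ := Finset.card_eq_one.1 hc2
        have hz' : z ∈ insert (τ (v y)) (v y) \ v x := by rw [hz]; simp
        rw [Finset.mem_sdiff, Finset.mem_insert] at hz'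
        have hxe : v x = (insert (τ (v y)) (v y)).erase z := by
          rw [← Finset.sdiff_singleton_eq_erase, ← hz, Finset.sdiff_sdiff_eq_self hle]
        have hzt : z ≠ τ (v y) := by
          rintro rfl
          rw [Finset.erase_insert hy] at hxe
          apply hne
          apply Subtype.ext
          exact vinj hxe
        have hzy : z ∈ v y := by tauto
        have hxe' : v x = insert (τ (v y)) ((v y).erase z) := by
          rw [hxe, Finset.erase_insert_of_ne hzt.symm]
        have h5 := h4 _ (v1 y) (v2 y) (v3 y) hy z hzy
        rw [← hxe'] at h5
        exact h5 (v3 x) hx }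
  have hreg : Q.IsRegular := R.isRegular
  exact Q.anodyneExtensions

end CC

end partA4

section partA5

namespace CC
section cox
open List
variable {B W : Type} [Group W] {M : CoxeterMatrix B} (cs : CoxeterSystem M W)

open Classical in
noncomputable def flipFun (s : W) : W × ZMod 2 → W × ZMod 2 :=
  fun p => (s * p.1 * s, p.2 + if p.1 = s then 1 else 0)

lemma flipFun_invol (s : W) (hs : s * s = 1) : Function.Involutive (flipFun s) := by
  classical
  rintro ⟨t, e⟩
  have h1 : s * (s * t * s) * s = t := by
    calc s * (s * t * s) * s = (s * s) * t * (s * s) := by group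
      _ = t := by rw [hs]; simp
  have h2 : (s * t * s = s) ↔ t = s := by
    constructor
    · intro h
      rw [← h1, h, hs, one_mul]
    · rintro rfl
      rw [hs, one_mul]
  simp only [flipFun, h1, h2, add_assoc, CharTwo.add_self_eq_zero, add_zero]

noncomputable def flip (i : B) : Equiv.Perm (W × ZMod 2) :=
  (flipFun_invol (cs.simple i) (cs.simple_mul_simple_self i)).toPerm

open Classical in
lemma flip_apply (i : B) (t : W) (e : ZMod 2) : flip cs i (t, e) =
    (cs.simple i * t * cs.simple i, e + if t = cs.simple i then 1 else 0) := rfl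

open Classical in
lemma flip_pow (i j : B) (n : ℕ) (t : W) (e : ZMod 2) :
    ((flip cs i * flip cs j) ^ n) (t, e) =
    ((cs.simple i * cs.simple j) ^ n * t * ((cs.simple i * cs.simple j) ^ n)⁻¹,
      e + ∑ k ∈ Finset.range (2 * n),
        if t = cs.simple j * (cs.simple i * cs.simple j) ^ k then 1 else 0) := by
  induction n with
  | zero => simp
  | succ n ih =>
    rw [pow_succ', Equiv.Perm.mul_apply, ih, Equiv.Perm.mul_apply, flip_apply, flip_apply]
    set a := cs.simple i with ha
    set b := cs.simple j with hb
    have haa : a * a = 1 := cs.simple_mul_simple_self i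
    have hbb : b * b = 1 := cs.simple_mul_simple_self j
    have hai : a⁻¹ = a := cs.inv_simple i
    have hbi : b⁻¹ = b := cs.inv_simple j
    have hc : ∀ n : ℕ, (a * b) ^ n * b = b * ((a * b) ^ n)⁻¹ := by
      intro n
      rw [← inv_pow, mul_inv_rev, hai, hbi]
      have : SemiconjBy b (b * a) (a * b) := by
        unfold SemiconjBy; rw [← mul_assoc, hbb, mul_assoc, hbb]; simp
      exact (this.pow_right n).symm
    have hc' : ∀ n : ℕ, ((a * b) ^ n)⁻¹ * b = b * ((a * b) ^ n) := by
      intro n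
      rw [inv_mul_eq_iff_eq_mul, ← mul_assoc, hc]; simp
    rw [mul_add, Finset.sum_range_succ, Finset.sum_range_succ]
    ext
    · simp only
      rw [pow_succ', mul_inv_rev, mul_inv_rev, hai, hbi]
      simp only [mul_assoc]
    · simp only
      have e1 : ((a * b) ^ n * t * ((a * b) ^ n)⁻¹ = b) ↔ t = b * (a * b) ^ (2 * n) := by
        rw [two_mul, pow_add, ← mul_assoc, ← hc', mul_inv_eq_iff_eq_mul, mul_assoc, eq_inv_mul_iff_mul_eq]
      have e2 : (b * ((a * b) ^ n * t * ((a * b) ^ n)⁻¹) * b = a) ↔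
          t = b * (a * b) ^ (2 * n + 1) := by
        have : b * (a * b) ^ (2 * n + 1) = ((a*b)^n)⁻¹ * (b * a * b) * (a * b)^n := by
          rw [mul_assoc b a b, ← mul_assoc _ b, hc', two_mul, add_assoc, add_comm n 1, pow_add, pow_add, pow_one]
          simp only [mul_assoc]
        rw [this]
        generalize (a * b) ^ n = y
        constructor
        · intro h
          rw [← h]
          have : b * (b * (y * t * (y)⁻¹) * b) * b = (b * b) * (y * t * (y)⁻¹) * (b * b) := by group
          rw [this, hbb]; group
        · intro h
          rw [h]
          have : b * (y * ((y)⁻¹ * (b * a * b) * y) * (y)⁻¹) * b = (b * b) * a * (b * b) := by group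
          rw [this, hbb]; simp
      simp only [e1, e2, add_assoc]

lemma flip_liftable : M.IsLiftable (flip cs) := by
  classical
  intro i j
  ext ⟨t, e⟩ : 1
  rw [flip_pow, cs.simple_mul_simple_pow, two_mul, Finset.sum_range_add]
  simp only [pow_add, cs.simple_mul_simple_pow, one_mul, CharTwo.add_self_eq_zero]
  simp

noncomputable def flipHom : W →* Equiv.Perm (W × ZMod 2) := cs.lift ⟨flip cs, flip_liftable cs⟩

open Classical in
lemma flipHom_wordProd (ω : List B) (t : W) (e : ZMod 2) :
    flipHom cs (cs.wordProd ω) (t, e) =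
      (cs.wordProd ω * t * (cs.wordProd ω)⁻¹, e + ((cs.rightInvSeq ω).count t : ZMod 2)) := by
  induction ω with
  | nil => simp
  | cons i ω ih =>
    rw [cs.wordProd_cons, map_mul, Equiv.Perm.mul_apply, ih]
    have : flipHom cs (cs.simple i) = flip cs i := cs.lift_apply_simple (flip_liftable cs) i
    rw [this, flip_apply, CoxeterSystem.rightInvSeq, List.count_cons]
    ext
    · simp [mul_assoc]
    · have : (cs.wordProd ω * t * (cs.wordProd ω)⁻¹ = cs.simple i) ↔
        (cs.wordProd ω)⁻¹ * cs.simple i * cs.wordProd ω = t := by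
        rw [mul_inv_eq_iff_eq_mul, mul_assoc, inv_mul_eq_iff_eq_mul, eq_comm]
      simp only [this, add_assoc, beq_iff_eq]
      push_cast
      rfl

open Classical in
lemma count_congr {ω ω' : List B} (h : cs.wordProd ω = cs.wordProd ω') (t : W) :
    ((cs.rightInvSeq ω).count t : ZMod 2) = (cs.rightInvSeq ω').count t := by
  have h1 := flipHom_wordProd cs ω t 0
  rw [h, flipHom_wordProd] at h1
  simpa using (congrArg Prod.snd h1).symm

lemma exchange (ω : List B) (i : B)
    (h : cs.IsRightDescent (cs.wordProd ω) i) :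
    ∃ j < ω.length, cs.wordProd ω * cs.simple i = cs.wordProd (ω.eraseIdx j) := by
  classical
  obtain ⟨η, hη, hηe⟩ := cs.exists_isReduced (cs.wordProd ω * cs.simple i)
  have hlen : η.length < cs.length (cs.wordProd ω) := by
    rw [← hη, ← hηe]; exact h
  have hp : cs.wordProd (η.concat i) = cs.wordProd ω := by
    rw [cs.wordProd_concat, ← hηe]; simp
  have hred : cs.IsReduced (η.concat i) := by
    unfold CoxeterSystem.IsReduced
    rw [hp]
    apply le_antisymm
    · rw [← hp]; exact cs.length_wordProd_le _
    · simpa using hlen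
  have hm : cs.simple i ∈ cs.rightInvSeq (η.concat i) := by
    rw [cs.rightInvSeq_concat]; simp
  have hc := count_congr cs hp (cs.simple i)
  rw [List.count_eq_one_of_mem hred.nodup_rightInvSeq hm] at hc
  have hmem : cs.simple i ∈ cs.rightInvSeq ω := by
    by_contra hn
    rw [List.count_eq_zero_of_not_mem hn] at hc
    simp at hc
  obtain ⟨j, hj, hje⟩ := List.getElem_of_mem hmem
  rw [cs.length_rightInvSeq] at hj
  refine ⟨j, hj, ?_⟩
  rw [← cs.wordProd_mul_getD_rightInvSeq, List.getD_eq_getElem _ _ (by simpa using hj), hje]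
end cox
end CC

end partA5

section partA5b

namespace CC
section coxb
open List
variable {B W : Type} [Group W] {M : CoxeterMatrix B} (cs : CoxeterSystem M W)

lemma simple_mem_par {T : Set B} {i : B} (hi : i ∈ T) : cs.simple i ∈ cs.parabolic T :=
  Subgroup.subset_closure ⟨i, hi, rfl⟩

lemma word_mem_par {T : Set B} (b : List B) (hb : ∀ i ∈ b, i ∈ T) : cs.wordProd b ∈ cs.parabolic T := by
  induction b with
  | nil => simp [one_mem]
  | cons i b ih =>
    rw [cs.wordProd_cons]
    exact mul_mem (simple_mem_par cs (hb i (by simp))) (ih fun k hk => hb k (by simp [hk]))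

lemma min_add (T : Set B) (m : W) (hmin : ∀ u ∈ cs.parabolic T, cs.length m ≤ cs.length (m * u))
    (u : W) (hu : u ∈ cs.parabolic T) :
    ∃ b : List B, (∀ i ∈ b, i ∈ T) ∧ u = cs.wordProd b ∧ cs.length (m * u) = cs.length m + b.length := by
  obtain ⟨a, ha, hae⟩ := cs.exists_isReduced m
  have hal : a.length = cs.length m := by rw [hae]; exact ha.symm
  have step : ∀ x, ∀ i ∈ T, (∃ b : List B, (∀ i ∈ b, i ∈ T) ∧ x = cs.wordProd b ∧ cs.length (m * x) = cs.length m + b.length) →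
     (∃ b : List B, (∀ i ∈ b, i ∈ T) ∧ x * cs.simple i = cs.wordProd b ∧ cs.length (m * (x * cs.simple i)) = cs.length m + b.length) := by
    rintro x i hi ⟨b, hb, rfl, hl⟩
    by_cases hd : cs.IsRightDescent (m * cs.wordProd b) i
    · have hd' : cs.IsRightDescent (cs.wordProd (a ++ b)) i := by rwa [cs.wordProd_append, ← hae]
      obtain ⟨j, hj, hje⟩ := exchange cs (a ++ b) i hd'
      rw [cs.wordProd_append, ← hae] at hje
      by_cases hja : j < a.length
      · exfalso
        rw [List.eraseIdx_append_of_lt_length hja, cs.wordProd_append] at hje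
        have h1 := hmin (cs.wordProd b * cs.simple i * (cs.wordProd b)⁻¹)
          (mul_mem (mul_mem (word_mem_par cs b hb) (simple_mem_par cs hi)) (inv_mem (word_mem_par cs b hb)))
        have h2 : m * (cs.wordProd b * cs.simple i * (cs.wordProd b)⁻¹) = cs.wordProd (a.eraseIdx j) := by
          rw [← mul_assoc, ← mul_assoc, hje]; simp
        rw [h2] at h1
        have h3 := cs.length_wordProd_le (a.eraseIdx j)
        rw [List.length_eraseIdx_of_lt hja] at h3
        omega
      · push Not at hja
        rw [List.eraseIdx_append_of_length_le hja, cs.wordProd_append, ← hae, mul_assoc] at hje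
        refine ⟨b.eraseIdx (j - a.length), fun k hk => hb k (List.mem_of_mem_eraseIdx hk), mul_left_cancel hje, ?_⟩
        have := (cs.isRightDescent_iff).1 hd
        rw [mul_assoc] at this
        rw [List.length_eraseIdx_of_lt (by simp at hj; omega)]
        simp at hj
        omega
    · refine ⟨b.concat i, ?_, ?_, ?_⟩
      · intro k hk
        simp at hk
        rcases hk with hk | rfl
        · exact hb k hk
        · exact hi
      · rw [cs.wordProd_concat]
      · have := (cs.not_isRightDescent_iff).1 hd
        rw [← mul_assoc, this, hl]; simp; omega
  unfold CoxeterSystem.parabolic at hu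
  induction hu using Subgroup.closure_induction_right with
  | one => exact ⟨[], by simp⟩
  | mul_right x hx y hy ih =>
    obtain ⟨i, hi, rfl⟩ := hy
    exact step x i hi ih
  | mul_inv_cancel x hx y hy ih =>
    obtain ⟨i, hi, rfl⟩ := hy
    rw [cs.inv_simple]
    exact step x i hi ih

lemma no_desc_min (T : Set B) (w : W) (hw : ∀ i ∈ T, ¬ cs.IsRightDescent w i)
    (u : W) (hu : u ∈ cs.parabolic T) (hu1 : u ≠ 1) : cs.length w < cs.length (w * u) := by
  obtain ⟨u0, hu0, hmin⟩ : ∃ u0 ∈ cs.parabolic T, ∀ u ∈ cs.parabolic T, cs.length (w * u0) ≤ cs.length (w * u) := by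
    obtain ⟨u0, h0, h1⟩ := WellFounded.has_min (measure (fun u : W => cs.length (w * u))).wf
      (cs.parabolic T : Set W) ⟨1, one_mem _⟩
    exact ⟨u0, h0, fun u hu => not_lt.1 (h1 u hu)⟩
  have hmin' : ∀ u ∈ cs.parabolic T, cs.length (w * u0) ≤ cs.length (w * u0 * u) := fun u hu => by
    rw [mul_assoc]; exact hmin _ (mul_mem hu0 hu)
  have h1 : u0 = 1 := by
    obtain ⟨b, hb, he, hl⟩ := min_add cs T (w * u0) hmin' u0⁻¹ (inv_mem hu0)
    rcases List.eq_nil_or_concat' b with rfl | ⟨b', i, rfl⟩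
    · simpa using he
    · exfalso
      apply hw i (hb i (by simp))
      have e : w * cs.simple i = w * u0 * cs.wordProd b' := by
        have : w = w * u0 * u0⁻¹ := by group
        conv_lhs => rw [this, he, cs.wordProd_append]
        simp [mul_assoc]
      unfold CoxeterSystem.IsRightDescent
      rw [e]
      have h2 := cs.length_mul_le (w * u0) (cs.wordProd b')
      have h3 := cs.length_wordProd_le b'
      simp at hl
      omega
  subst h1
  simp only [mul_one] at hmin'
  obtain ⟨b, hb, he, hl⟩ := min_add cs T w hmin' u hu
  rcases b with _ | ⟨i, b⟩
  · exact absurd (by simpa using he) hu1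
  · rw [hl]; simp

lemma top_word (w : W) (hw : ∀ i, cs.IsRightDescent w i) (c : List B) (hc : cs.IsReduced c) :
    ∃ a : List B, w = cs.wordProd (a ++ c) ∧ a.length + c.length = cs.length w := by
  induction c using List.reverseRecOn with
  | nil =>
    obtain ⟨a, ha, hae⟩ := cs.exists_isReduced w
    exact ⟨a, by simpa using hae, by rw [hae]; simpa using ha.symm⟩
  | append_singleton c i ih =>
    have hc' : cs.IsReduced c := by
      have := hc.take c.length
      simpa using this
    obtain ⟨a, hae, hal⟩ := ih hc'
    obtain ⟨j, hj, hje⟩ := exchange cs (a ++ c) i (hae ▸ hw i)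
    by_cases hja : j < a.length
    · rw [← hae, List.eraseIdx_append_of_lt_length hja] at hje
      refine ⟨a.eraseIdx j, ?_, ?_⟩
      · rw [← List.append_assoc, cs.wordProd_append, ← hje]; simp
      · rw [List.length_eraseIdx_of_lt hja]; simp; omega
    · exfalso
      push Not at hja
      rw [List.eraseIdx_append_of_length_le hja, cs.wordProd_append, cs.wordProd_append, mul_assoc] at hje
      have h1 := mul_left_cancel hje
      have h2 : cs.wordProd (c ++ [i]) = cs.wordProd (c.eraseIdx (j - a.length)) := by
        rw [← h1, cs.wordProd_append]; simp
      have h3 := cs.length_wordProd_le (c.eraseIdx (j - a.length))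
      rw [← h2, hc] at h3
      have := List.length_eraseIdx_le c (j - a.length)
      simp at h3; omega

lemma exists_not_desc [Finite B] [Infinite W] (w : W) : ∃ i, ¬ cs.IsRightDescent w i := by
  by_contra! hw
  have hfin : (cs.wordProd '' {l : List B | l.length ≤ cs.length w}).Finite :=
    (List.finite_length_le B _).image _
  apply Set.infinite_univ (α := W)
  apply hfin.subset
  intro u _
  obtain ⟨c, hc, rfl⟩ := cs.exists_isReduced u
  obtain ⟨a, -, h⟩ := top_word cs w hw c hc
  exact ⟨c, by simp; omega, rfl⟩
end coxb
end CC

end partA5b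

section partA6

namespace CC
section app
variable {B W : Type} [Group W] {M : CoxeterMatrix B} (cs : CoxeterSystem M W)

lemma le_def' (X Y : cs.CosetFace) : X ≤ Y ↔ Y.1 ⊆ X.1 := Iff.rfl

def typ (w : W) (C : cs.CosetFace) : Set B := {i | w * cs.simple i ∈ C.1}

def Dsc (w : W) : Set B := {i | cs.IsRightDescent w i}

def cos (w : W) (T : Set B) (hT : T ≠ Set.univ) : cs.CosetFace :=
  ⟨w • (cs.parabolic T : Set W), w, T, hT, rfl⟩

lemma mem_cos (w : W) (T : Set B) (hT : T ≠ Set.univ) (v : W) :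
    v ∈ (cos cs w T hT).1 ↔ w⁻¹ * v ∈ cs.parabolic T := by
  simp [cos, Set.mem_smul_set_iff_inv_smul_mem]

lemma self_mem_cos (w : W) (T : Set B) (hT : T ≠ Set.univ) : w ∈ (cos cs w T hT).1 := by
  rw [mem_cos]; simp [one_mem]

lemma cos_congr (w : W) {T T' : Set B} (hT : T ≠ Set.univ) (hT' : T' ≠ Set.univ) (h : T = T') :
    cos cs w T hT = cos cs w T' hT' := by subst h; rfl

lemma exists_cos (C : cs.CosetFace) (w : W) (hw : w ∈ C.1) : ∃ T hT, C = cos cs w T hT := by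
  obtain ⟨X, v, T, hT, rfl⟩ := C
  refine ⟨T, hT, Subtype.ext ?_⟩
  ext x
  simp only [Set.mem_smul_set_iff_inv_smul_mem, smul_eq_mul, SetLike.mem_coe, cos] at hw ⊢
  constructor
  · intro h
    have := mul_mem (inv_mem hw) h
    simpa [mul_assoc] using this
  · intro h
    have := mul_mem hw h
    simpa [mul_assoc] using this

lemma face_nonempty (C : cs.CosetFace) : ∃ w, w ∈ C.1 := by
  obtain ⟨X, v, T, hT, rfl⟩ := C
  exact ⟨v, self_mem_cos cs v T hT⟩

variable (hC2 : ∀ (T : Set B) i, cs.simple i ∈ cs.parabolic T → i ∈ T)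
include hC2

lemma typ_cos (w : W) (T : Set B) (hT : T ≠ Set.univ) : typ cs w (cos cs w T hT) = T := by
  ext i
  simp only [typ, Set.mem_setOf_eq, mem_cos, inv_mul_cancel_left]
  exact ⟨hC2 T i, simple_mem_par cs⟩

lemma le_iff_typ {w : W} {C C' : cs.CosetFace} (h : w ∈ C.1) (h' : w ∈ C'.1) :
    C ≤ C' ↔ typ cs w C' ⊆ typ cs w C := by
  obtain ⟨T, hT, rfl⟩ := exists_cos cs C w h
  obtain ⟨T', hT', rfl⟩ := exists_cos cs C' w h'
  constructor
  · intro hle i hi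
    exact hle hi
  · rw [typ_cos cs hC2, typ_cos cs hC2]
    intro hs x hx
    rw [mem_cos] at hx ⊢
    exact Subgroup.closure_mono (Set.image_mono hs) hx

lemma eq_of_typ {w : W} {C C' : cs.CosetFace} (h : w ∈ C.1) (h' : w ∈ C'.1)
    (e : typ cs w C = typ cs w C') : C = C' :=
  le_antisymm ((le_iff_typ cs hC2 h h').2 e.ge) ((le_iff_typ cs hC2 h' h).2 e.le)

lemma no_desc_lt {C : cs.CosetFace} {w : W} (hw : w ∈ C.1)
    (hd : ∀ i ∈ typ cs w C, ¬ cs.IsRightDescent w i) (v : W) (hv : v ∈ C.1) (hne : v ≠ w) :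
    cs.length w < cs.length v := by
  obtain ⟨T, hT, rfl⟩ := exists_cos cs C w hw
  rw [typ_cos cs hC2] at hd
  rw [mem_cos] at hv
  have := no_desc_min cs T w hd (w⁻¹ * v) hv (by rw [Ne, inv_mul_eq_one]; exact hne.symm)
  simpa using this

lemma exists_mm (C : cs.CosetFace) : ∃ w ∈ C.1, ∀ v ∈ C.1, v ≠ w → cs.length w < cs.length v := by
  obtain ⟨w, h0, h1⟩ := WellFounded.has_min (measure (fun u : W => cs.length u)).wf C.1 (face_nonempty cs C)
  exact ⟨w, h0, no_desc_lt cs hC2 h0 fun i hi hd => h1 _ hi hd⟩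
omit hC2

open Classical in
noncomputable def mm (C : cs.CosetFace) : W :=
  if h : ∃ w ∈ C.1, ∀ v ∈ C.1, v ≠ w → cs.length w < cs.length v then h.choose else 1
include hC2

lemma mm_mem (C : cs.CosetFace) : mm cs C ∈ C.1 := by
  unfold mm; rw [dif_pos (exists_mm cs hC2 C)]; exact (exists_mm cs hC2 C).choose_spec.1

lemma mm_lt (C : cs.CosetFace) (v : W) (hv : v ∈ C.1) (hne : v ≠ mm cs C) :
    cs.length (mm cs C) < cs.length v := by
  unfold mm at *; rw [dif_pos (exists_mm cs hC2 C)] at *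
  exact (exists_mm cs hC2 C).choose_spec.2 v hv hne

lemma mm_le (C : cs.CosetFace) (v : W) (hv : v ∈ C.1) : cs.length (mm cs C) ≤ cs.length v := by
  by_cases h : v = mm cs C
  · rw [h]
  · exact (mm_lt cs hC2 C v hv h).le

lemma mm_eq_iff {C : cs.CosetFace} {w : W} (hw : w ∈ C.1) :
    mm cs C = w ↔ ∀ i ∈ typ cs w C, ¬ cs.IsRightDescent w i := by
  constructor
  · rintro rfl i hi hd
    exact absurd (mm_le cs hC2 C _ hi) (not_le.2 hd)
  · intro h
    by_contra hne
    exact absurd (mm_le cs hC2 C w hw) (not_le.2 (no_desc_lt cs hC2 hw h _ (mm_mem cs hC2 C) hne))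

lemma mm_mono {C C' : cs.CosetFace} (h : C ≤ C') (hm : mm cs C ∈ C'.1) : mm cs C' = mm cs C := by
  by_contra hne
  exact absurd (mm_lt cs hC2 C' _ hm (Ne.symm hne)) (not_lt.2 (mm_le cs hC2 C _ (h (mm_mem cs hC2 C'))))

lemma mm_one {C : cs.CosetFace} (h : (1 : W) ∈ C.1) : mm cs C = 1 := by
  have := mm_le cs hC2 C 1 h
  simpa using this
omit hC2

def isTop (σ : Finset cs.CosetFace) (C : cs.CosetFace) : Prop := C ∈ σ ∧ ∀ C' ∈ σ, C' ≤ C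

open Classical in
noncomputable def wσ (σ : Finset cs.CosetFace) : W :=
  if h : ∃ C, isTop cs σ C then mm cs h.choose else 1

lemma wσ_eq {σ : Finset cs.CosetFace} {C : cs.CosetFace} (h : isTop cs σ C) : wσ cs σ = mm cs C := by
  have h' : ∃ C, isTop cs σ C := ⟨C, h⟩
  unfold wσ
  rw [dif_pos h']
  congr 1
  exact le_antisymm (h.2 _ h'.choose_spec.1) (h'.choose_spec.2 _ h.1)

lemma exists_top {σ : Finset cs.CosetFace} (hn : σ.Nonempty) (hc : IsChain (· ≤ ·) (σ : Set cs.CosetFace)) :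
    ∃ C, isTop cs σ C := by
  obtain ⟨C, hC⟩ := σ.exists_maximal hn
  refine ⟨C, hC.1, fun C' h' => ?_⟩
  rcases hc.total h' hC.1 with h | h
  · exact h
  · exact hC.2 h' h

variable [Finite B] [Infinite W]

lemma sub_ne {w : W} {T : Set B} (h : T ⊆ Dsc cs w) : T ≠ Set.univ := by
  rintro rfl
  obtain ⟨i, hi⟩ := exists_not_desc cs w
  exact hi (h (Set.mem_univ i))

def sgl (w : W) : cs.CosetFace := cos cs w ∅ (sub_ne cs (Set.empty_subset (Dsc cs w)))

lemma mem_sgl (w v : W) : v ∈ (sgl cs w).1 ↔ v = w := by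
  unfold sgl
  rw [mem_cos]
  simp [CoxeterSystem.parabolic, Subgroup.mem_bot, inv_mul_eq_one, eq_comm]

lemma le_sgl {w : W} {C : cs.CosetFace} (h : w ∈ C.1) : C ≤ sgl cs w := by
  intro v hv
  rw [mem_sgl] at hv
  exact hv ▸ h

lemma sgl_inj {w v : W} (h : sgl cs w = sgl cs v) : w = v := by
  exact (mem_sgl cs v w).1 (h ▸ (mem_sgl cs w w).2 rfl)

def Aσ (w : W) (σ : Finset cs.CosetFace) : Prop := ∃ C ∈ σ, C ≠ sgl cs w ∧ mm cs C = w

def Eσ (w : W) (σ : Finset cs.CosetFace) : Set B :=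
  {i | i ∈ Dsc cs w ∧ ∀ C ∈ σ, ¬ typ cs w C ⊆ Dsc cs w → i ∈ typ cs w C}

lemma Eσ_sub (w : W) (σ : Finset cs.CosetFace) : Eσ cs w σ ⊆ Dsc cs w := fun _ h => h.1

def τb (w : W) (σ : Finset cs.CosetFace) : cs.CosetFace :=
  cos cs w (Eσ cs w σ) (sub_ne cs (Eσ_sub cs w σ))

lemma τb_congr {w : W} {σ σ' : Finset cs.CosetFace}
    (h : ∀ C, ¬ typ cs w C ⊆ Dsc cs w → (C ∈ σ ↔ C ∈ σ')) : τb cs w σ = τb cs w σ' := by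
  apply cos_congr
  ext i
  refine and_congr_right fun _ => forall_congr' fun C => ?_
  constructor
  · intro H h1 h2; exact H ((h C h2).2 h1) h2
  · intro H h1 h2; exact H ((h C h2).1 h1) h2

open Classical in
noncomputable def τσ (σ : Finset cs.CosetFace) : cs.CosetFace :=
  if Aσ cs (wσ cs σ) σ then sgl cs (wσ cs σ) else τb cs (wσ cs σ) σ

open Classical in
noncomputable def ρσ (σ : Finset cs.CosetFace) : ℕ ×ₗ ℕ ×ₗ ℕ :=
  toLex (cs.length (wσ cs σ), toLex (if Aσ cs (wσ cs σ) σ then 1 else 0,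
    (σ.filter fun C => ¬ typ cs (wσ cs σ) C ⊆ Dsc cs (wσ cs σ)).card))

lemma τσ_a {w : W} {σ : Finset cs.CosetFace} (hw : wσ cs σ = w) (h : Aσ cs w σ) : τσ cs σ = sgl cs w := by
  subst hw; unfold τσ; rw [if_pos h]

lemma τσ_b {w : W} {σ : Finset cs.CosetFace} (hw : wσ cs σ = w) (h : ¬ Aσ cs w σ) : τσ cs σ = τb cs w σ := by
  subst hw; unfold τσ; rw [if_neg h]

include hC2
lemma mm_sgl (w : W) : mm cs (sgl cs w) = w := (mem_sgl cs w _).1 (mm_mem cs hC2 _)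

lemma wσ_mem {σ : Finset cs.CosetFace} (hn : σ.Nonempty) (hc : IsChain (· ≤ ·) (σ : Set cs.CosetFace))
    (C : cs.CosetFace) (hC : C ∈ σ) : wσ cs σ ∈ C.1 := by
  obtain ⟨C1, h1⟩ := exists_top cs hn hc
  rw [wσ_eq cs h1]
  exact h1.2 C hC (mm_mem cs hC2 C1)

lemma wσ_sgl {σ : Finset cs.CosetFace} {w : W} (h : sgl cs w ∈ σ) (hw : ∀ C ∈ σ, w ∈ C.1) : wσ cs σ = w := by
  rw [wσ_eq cs (C := sgl cs w) ⟨h, fun C hC => le_sgl cs (hw C hC)⟩, mm_sgl cs hC2]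

/-- data in case b -/
lemma case_b {σ : Finset cs.CosetFace} (hn : σ.Nonempty) (hc : IsChain (· ≤ ·) (σ : Set cs.CosetFace))
    (h1 : σ ≠ {sgl cs 1}) {w : W} (hw : wσ cs σ = w) (hA : ¬ Aσ cs w σ) :
    sgl cs w ∈ σ ∧ w ≠ 1 ∧ (Eσ cs w σ).Nonempty := by
  have hmem := wσ_mem cs hC2 hn hc
  rw [hw] at hmem
  have hs : sgl cs w ∈ σ := by
    obtain ⟨C1, hC1⟩ := exists_top cs hn hc
    have := wσ_eq cs hC1
    by_contra hns
    exact hA ⟨C1, hC1.1, fun e => hns (e ▸ hC1.1), by rw [← this, hw]⟩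
  have hne : w ≠ 1 := by
    rintro rfl
    apply h1
    apply Finset.eq_singleton_iff_unique_mem.2 ⟨hs, fun C hC => ?_⟩
    by_contra hne
    exact hA ⟨C, hC, hne, mm_one cs hC2 (hmem C hC)⟩
  refine ⟨hs, hne, ?_⟩
  classical
  by_cases hbad : (σ.filter fun C => ¬ typ cs w C ⊆ Dsc cs w).Nonempty
  · obtain ⟨C, hC⟩ := exists_top cs hbad (hc.mono (by intro x hx; simp at hx; exact hx.1))
    obtain ⟨hC1, hC2'⟩ := hC
    rw [Finset.mem_filter] at hC1
    have hmm : mm cs C ≠ w := fun e => hA ⟨C, hC1.1, by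
      rintro rfl
      apply hC1.2
      rw [sgl, typ_cos cs hC2]; exact Set.empty_subset _, e⟩
    rw [Ne, mm_eq_iff cs hC2 (hmem C hC1.1)] at hmm
    push Not at hmm
    obtain ⟨i, hi, hd⟩ := hmm
    refine ⟨i, hd, fun C' h' hb' => ?_⟩
    have := hC2' C' (Finset.mem_filter.2 ⟨h', hb'⟩)
    exact (le_iff_typ cs hC2 (hmem _ h') (hmem _ hC1.1)).1 this hi
  · obtain ⟨i, hi⟩ := cs.exists_rightDescent_of_ne_one hne
    refine ⟨i, hi, fun C hC hb => ?_⟩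
    exact absurd ⟨C, Finset.mem_filter.2 ⟨hC, hb⟩⟩ hbad

lemma typ_τb (w : W) (σ : Finset cs.CosetFace) : typ cs w (τb cs w σ) = Eσ cs w σ := typ_cos cs hC2 _ _ _
omit hC2
lemma mem_τb (w : W) (σ : Finset cs.CosetFace) : w ∈ (τb cs w σ).1 := self_mem_cos cs _ _ _
include hC2

lemma mm_τb {w : W} {σ : Finset cs.CosetFace} (h : (Eσ cs w σ).Nonempty) : mm cs (τb cs w σ) ≠ w := by
  rw [Ne, mm_eq_iff cs hC2 (mem_τb cs w σ), typ_τb cs hC2]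
  obtain ⟨i, hi⟩ := h
  exact fun H => H i hi hi.1

lemma τb_ne {w : W} {σ : Finset cs.CosetFace} (h : (Eσ cs w σ).Nonempty) : τb cs w σ ≠ sgl cs w :=
  fun e => mm_τb cs hC2 h (by rw [e, mm_sgl cs hC2])

end app
end CC

end partA6

section partA7

namespace CC
section app2
variable {B W : Type} [Group W] {M : CoxeterMatrix B} (cs : CoxeterSystem M W)

lemma lexlt1 {a a' : ℕ} {b b' c c' : ℕ} (h : a < a') :
    (toLex (a, toLex (b, c)) : ℕ ×ₗ ℕ ×ₗ ℕ) < toLex (a', toLex (b', c')) := by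
  rw [Prod.Lex.toLex_lt_toLex]; exact Or.inl h

lemma lexlt2 {a : ℕ} {b b' c c' : ℕ} (h : b < b') :
    (toLex (a, toLex (b, c)) : ℕ ×ₗ ℕ ×ₗ ℕ) < toLex (a, toLex (b', c')) := by
  rw [Prod.Lex.toLex_lt_toLex]; exact Or.inr ⟨rfl, by rw [Prod.Lex.toLex_lt_toLex]; exact Or.inl h⟩

lemma lexlt3 {a : ℕ} {b c c' : ℕ} (h : c < c') :
    (toLex (a, toLex (b, c)) : ℕ ×ₗ ℕ ×ₗ ℕ) < toLex (a, toLex (b, c')) := by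
  rw [Prod.Lex.toLex_lt_toLex]
  exact Or.inr ⟨rfl, by rw [Prod.Lex.toLex_lt_toLex]; exact Or.inr ⟨rfl, h⟩⟩

variable [Finite B] [Infinite W]
variable (hC2 : ∀ (T : Set B) i, cs.simple i ∈ cs.parabolic T → i ∈ T)
include hC2

lemma comp_b {σ : Finset cs.CosetFace} (hc : IsChain (· ≤ ·) (σ : Set cs.CosetFace)) {w : W}
    (hmem : ∀ C ∈ σ, w ∈ C.1) (C : cs.CosetFace) (hC : C ∈ σ) : C ≤ τb cs w σ ∨ τb cs w σ ≤ C := by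
  rw [le_iff_typ cs hC2 (hmem C hC) (mem_τb cs w σ), le_iff_typ cs hC2 (mem_τb cs w σ) (hmem C hC),
    typ_τb cs hC2]
  by_cases hb : typ cs w C ⊆ Dsc cs w
  · right
    intro i hi
    refine ⟨hb hi, fun C' hC' hb' => ?_⟩
    rcases hc.total hC hC' with h | h
    · exact absurd (((le_iff_typ cs hC2 (hmem C hC) (hmem C' hC')).1 h).trans hb) hb'
    · exact (le_iff_typ cs hC2 (hmem C' hC') (hmem C hC)).1 h hi
  · left
    intro i hi
    exact hi.2 C hC hb

lemma main_case : ContractibleSpace (SSet.toTop.obj (nerve cs.CosetFace)) := by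
  refine CC.matching (sgl cs 1) (τσ cs) (ρσ cs) ?_ ?_ ?_ ?_
  · intro σ hn hc h1 C hC
    obtain ⟨w, hw⟩ : ∃ w, wσ cs σ = w := ⟨_, rfl⟩
    have hmem := wσ_mem cs hC2 hn hc
    rw [hw] at hmem
    by_cases hA : Aσ cs w σ
    · rw [τσ_a cs hw hA]
      exact Or.inl (le_sgl cs (hmem C hC))
    · rw [τσ_b cs hw hA]
      exact comp_b cs hC2 hc hmem C hC
  · intro _ σ hn hc h1 hτ
    obtain ⟨w, hw⟩ : ∃ w, wσ cs σ = w := ⟨_, rfl⟩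
    have hmem := wσ_mem cs hC2 hn hc
    rw [hw] at hmem
    by_cases hA : Aσ cs w σ
    · rw [τσ_a cs hw hA]
      have hw' : wσ cs (insert (sgl cs w) σ) = w := by
        apply wσ_sgl cs hC2 (Finset.mem_insert_self _ _)
        intro C hC
        rcases Finset.mem_insert.1 hC with rfl | hC
        · rw [mem_sgl]
        · exact hmem C hC
      obtain ⟨C, hC, hC'⟩ := hA
      exact τσ_a cs hw' ⟨C, Finset.mem_insert_of_mem hC, hC'⟩
    · obtain ⟨hs, hne, hE⟩ := case_b cs hC2 hn hc h1 hw hA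
      rw [τσ_b cs hw hA]
      have hw' : wσ cs (insert (τb cs w σ) σ) = w := by
        apply wσ_sgl cs hC2 (Finset.mem_insert_of_mem hs)
        intro C hC
        rcases Finset.mem_insert.1 hC with rfl | hC
        · exact mem_τb cs w σ
        · exact hmem C hC
      rw [τσ_b cs hw']
      · apply τb_congr
        intro C hC
        rw [Finset.mem_insert, or_iff_right]
        rintro rfl
        exact hC (by rw [typ_τb cs hC2]; exact Eσ_sub cs w σ)
      · rintro ⟨C, hC, hC1, hC2'⟩
        rcases Finset.mem_insert.1 hC with rfl | hC
        · exact mm_τb cs hC2 hE hC2'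
        · exact hA ⟨C, hC, hC1, hC2'⟩
  · intro _ σ hn hc h1 hτ
    obtain ⟨w, hw⟩ : ∃ w, wσ cs σ = w := ⟨_, rfl⟩
    have hmem := wσ_mem cs hC2 hn hc
    rw [hw] at hmem
    by_cases hA : Aσ cs w σ
    · rw [τσ_a cs hw hA] at hτ ⊢
      obtain ⟨C, hC, hC1, hC'⟩ := hA
      have hCe : C ∈ σ.erase (sgl cs w) := Finset.mem_erase.2 ⟨hC1, hC⟩
      refine ⟨⟨C, hCe⟩, ?_, ?_⟩
      · intro e
        rw [e, Finset.mem_singleton] at hCe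
        apply hC1
        rw [hCe, mm_sgl cs hC2] at hC'
        rw [hCe, hC']
      · obtain ⟨C2, h2⟩ := exists_top cs ⟨C, hCe⟩ (hc.mono (by
          intro x hx; exact Finset.mem_of_mem_erase hx))
        have e : mm cs C2 = mm cs C := by
          apply mm_mono cs hC2 (h2.2 C hCe)
          rw [hC']
          exact hmem _ (Finset.mem_of_mem_erase h2.1)
        exact τσ_a cs (by rw [wσ_eq cs h2, e, hC']) ⟨C, hCe, hC1, hC'⟩
    · obtain ⟨hs, hne, hE⟩ := case_b cs hC2 hn hc h1 hw hA
      rw [τσ_b cs hw hA] at hτ ⊢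
      have hs' : sgl cs w ∈ σ.erase (τb cs w σ) := Finset.mem_erase.2 ⟨(τb_ne cs hC2 hE).symm, hs⟩
      refine ⟨⟨_, hs'⟩, ?_, ?_⟩
      · intro e
        rw [e, Finset.mem_singleton] at hs'
        exact hne (sgl_inj cs hs')
      · have hw' : wσ cs (σ.erase (τb cs w σ)) = w :=
          wσ_sgl cs hC2 hs' fun C hC => hmem C (Finset.mem_of_mem_erase hC)
        rw [τσ_b cs hw']
        · apply τb_congr
          intro C hC
          rw [Finset.mem_erase, and_iff_right]
          rintro rfl
          exact hC (by rw [typ_τb cs hC2]; exact Eσ_sub cs w σ)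
        · rintro ⟨C, hC, hC'⟩
          exact hA ⟨C, Finset.mem_of_mem_erase hC, hC'⟩
  · intro _ σ hn hc h1 hτ z hz hx1 hx
    obtain ⟨w, hw⟩ : ∃ w, wσ cs σ = w := ⟨_, rfl⟩
    have hmem := wσ_mem cs hC2 hn hc
    rw [hw] at hmem
    by_cases hA : Aσ cs w σ
    · rw [τσ_a cs hw hA] at hτ hx1 hx ⊢
      have hw' : wσ cs (insert (sgl cs w) (σ.erase z)) = w := by
        apply wσ_sgl cs hC2 (Finset.mem_insert_self _ _)
        intro C hC
        rcases Finset.mem_insert.1 hC with rfl | hC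
        · rw [mem_sgl]
        · exact hmem C (Finset.mem_of_mem_erase hC)
      by_cases hA' : Aσ cs w (insert (sgl cs w) (σ.erase z))
      · rw [τσ_a cs hw' hA'] at hx
        exact absurd (Finset.mem_insert_self _ _) hx
      · unfold ρσ
        rw [hw', hw, if_pos hA, if_neg hA']
        exact lexlt2 one_pos
    · obtain ⟨hs, hne, hE⟩ := case_b cs hC2 hn hc h1 hw hA
      rw [τσ_b cs hw hA] at hτ hx1 hx ⊢
      have hmem' : ∀ C ∈ insert (τb cs w σ) (σ.erase z), w ∈ C.1 := by
        intro C hC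
        rcases Finset.mem_insert.1 hC with rfl | hC
        · exact mem_τb cs w σ
        · exact hmem C (Finset.mem_of_mem_erase hC)
      by_cases hzs : z = sgl cs w
      · have hch : IsChain (· ≤ ·) ((insert (τb cs w σ) (σ.erase z) : Finset _) : Set cs.CosetFace) := by
          rw [Finset.coe_insert]
          apply (hc.mono (by intro x hx; exact Finset.mem_of_mem_erase hx)).insert
          intro C hC _
          exact (comp_b cs hC2 hc hmem C (Finset.mem_of_mem_erase hC)).symm
        obtain ⟨C, hC⟩ := exists_top cs ⟨_, Finset.mem_insert_self _ _⟩ hch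
        have hmm : mm cs C ≠ w := by
          rcases Finset.mem_insert.1 hC.1 with rfl | h
          · exact mm_τb cs hC2 hE
          · intro e
            rw [hzs] at h
            exact hA ⟨C, Finset.mem_of_mem_erase h, Finset.ne_of_mem_erase h, e⟩
        unfold ρσ
        apply lexlt1
        rw [wσ_eq cs hC, hw]
        exact mm_lt cs hC2 C w (hmem' C hC.1) hmm.symm
      · have hw' : wσ cs (insert (τb cs w σ) (σ.erase z)) = w :=
          wσ_sgl cs hC2 (Finset.mem_insert_of_mem (Finset.mem_erase.2 ⟨Ne.symm hzs, hs⟩)) hmem'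
        have hA' : ¬ Aσ cs w (insert (τb cs w σ) (σ.erase z)) := by
          rintro ⟨C, hC, hC1, hC2'⟩
          rcases Finset.mem_insert.1 hC with rfl | hC
          · exact mm_τb cs hC2 hE hC2'
          · exact hA ⟨C, Finset.mem_of_mem_erase hC, hC1, hC2'⟩
        have hgood : typ cs w (τb cs w σ) ⊆ Dsc cs w := by
          rw [typ_τb cs hC2]; exact Eσ_sub cs w σ
        by_cases hzb : typ cs w z ⊆ Dsc cs w
        · exfalso
          apply hx
          rw [τσ_b cs hw' hA']
          have : τb cs w (insert (τb cs w σ) (σ.erase z)) = τb cs w σ := by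
            apply τb_congr
            intro C hC
            rw [Finset.mem_insert, Finset.mem_erase, or_iff_right, and_iff_right]
            · rintro rfl; exact hC hzb
            · rintro rfl; exact hC hgood
          rw [this]
          exact Finset.mem_insert_self _ _
        · unfold ρσ
          rw [hw', hw, if_neg hA, if_neg hA']
          apply lexlt3
          classical
          apply Finset.card_lt_card
          rw [Finset.ssubset_iff_of_subset]
          · refine ⟨z, Finset.mem_filter.2 ⟨hz, hzb⟩, ?_⟩
            rw [Finset.mem_filter, Finset.mem_insert]
            rintro ⟨h | h, -⟩
            · rw [h] at hzb; exact hzb hgood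
            · simp at h
          · intro C hC
            rw [Finset.mem_filter, Finset.mem_insert] at hC
            obtain ⟨h | h, hb⟩ := hC
            · rw [h] at hb; exact absurd hgood hb
            · exact Finset.mem_filter.2 ⟨Finset.mem_of_mem_erase h, hb⟩
omit hC2

lemma all_cases : ContractibleSpace (SSet.toTop.obj (nerve cs.CosetFace)) := by
  by_cases hC2 : ∀ (T : Set B) i, cs.simple i ∈ cs.parabolic T → i ∈ T
  · exact main_case cs hC2
  · push Not at hC2
    obtain ⟨T, i, hi, hT⟩ := hC2
    have hTu : T ≠ Set.univ := fun e => hT (e ▸ Set.mem_univ i)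
    have hU : ({i}ᶜ : Set B) ≠ Set.univ := by simp
    have htop : ∀ x : W, x ∈ cs.parabolic ({i}ᶜ : Set B) := by
      intro x
      have : ∀ j, cs.simple j ∈ cs.parabolic ({i}ᶜ : Set B) := by
        intro j
        by_cases hj : j = i
        · subst hj
          exact Subgroup.closure_mono (Set.image_mono (by rintro k hk rfl; exact hT hk)) hi
        · exact simple_mem_par cs hj
      induction x using cs.simple_induction_right with
      | one => exact one_mem _
      | mul_simple_right w j ih => exact mul_mem ih (this j)
    let b : cs.CosetFace := cos cs 1 {i}ᶜ hU
    have hb : ∀ C : cs.CosetFace, b ≤ C := by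
      intro C x _
      rw [mem_cos]; exact htop _
    refine CC.matching b (fun _ => b) (α := ℕ) (fun _ => 0) ?_ ?_ ?_ ?_
    · intro σ _ _ _ a _; exact Or.inr (hb a)
    · intros; rfl
    · intro _ σ hn _ h1 hbσ
      refine ⟨?_, ?_, rfl⟩
      · rw [Finset.nonempty_iff_ne_empty]
        intro e
        rw [Finset.erase_eq_empty_iff] at e
        rcases e with e | e
        · exact hn.ne_empty e
        · exact h1 e
      · intro e
        have : b ∈ σ.erase b := by rw [e]; simp
        simp at this
    · intro _ σ _ _ _ _ z _ _ h
      exact absurd (Finset.mem_insert_self _ _) h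
end app2
end CC


end partA7

/-- Serre.  If `W` is an infinite Coxeter group (with finite generating
set `S`), then the Coxeter complex `X_W` is contractible. -/
theorem coxeterComplex_contractible {B W : Type} [Finite B] [Group W] [Infinite W]
    {M : CoxeterMatrix B} (cs : CoxeterSystem M W) :
    ContractibleSpace cs.coxeterComplex := by
  exact CC.all_cases cs
end
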